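/- arXiv:1907.09477 — 7 statements merged into one kernel-verified Lean document; each statement's English description precedes it below -/
import Mathlib

section
/- Let C_∞ be a d-dimensional extreme-value copula such that for each j = 1,…,d the first-order partial derivative Ċ_{∞,j}(u) := ∂C_∞(u)/∂u_j exists and is continuous on {u ∈ [0,1]^d : u_j ∈ (0,1)}. Then for every N ∈ ℕ and all points u_1, …, u_N ∈ [0,1]^d, the N×N matrix with (i,j)-entry γ^D(u_i, u_j) − γ(u_j, u_i, 1, 1) is symmetric positive semidefinite; that is, the covariance matrix of the limiting empirical process based on sliding block maxima with known margins is dominated in the Loewner order by that of the corresponding disjoint-blocks process. -/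
/-!
Put `w = C(u ∧ v)` and `p = C(u) C(v)`. For `c = a = 1` the kernel is
`γ(v, u, 1, 1) = 2 ∫₀¹ p^s w^(1-s) ds - 2 p`, so the difference of the two kernels is
`w + p - 2 ∫₀¹ p^s w^(1-s) ds`. Symmetrizing the integrand under `s ↦ 1 - s` turns this into

  `∫₀¹ (w^s - p^s) (w^(1-s) - p^(1-s)) ds`.

By max-stability `w^s - p^s = C(u^s ∧ v^s) - C(u^s) C(v^s)`, which is the covariance of the
indicators of the lower orthants at `u^s` and `v^s` (`posSemidef_copula`, `posSemidef_rpow`).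
Hence for each `s` the integrand is the Schur product of two positive semidefinite matrices, and
positive semidefiniteness survives integration in `s` (`posSemidef_integral`).
-/

open MeasureTheory Filter Set

noncomputable section

/-- The closed unit cube `[0,1]^d` in `ℝ^d`. -/
def unitBox (d : ℕ) : Set (Fin d → ℝ) := {u | ∀ j, u j ∈ Set.Icc (0:ℝ) 1}

/-- `C` is (the restriction to `[0,1]^d` of) the distribution function of a Borel probability
measure concentrated on `[0,1]^d` whose one-dimensional margins are uniform on `[0,1]`. -/
def IsCopula {d : ℕ} (C : (Fin d → ℝ) → ℝ) : Prop :=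
  ∃ μ : Measure (Fin d → ℝ), IsProbabilityMeasure μ ∧
    μ (unitBox d)ᶜ = 0 ∧
    (∀ u ∈ unitBox d, C u = (μ {x | ∀ j, x j ≤ u j}).toReal) ∧
    (∀ j : Fin d, ∀ t ∈ Set.Icc (0:ℝ) 1, (μ {x | x j ≤ t}).toReal = t)

/-- Extreme-value copula: max-stability. -/
def IsEVCopula {d : ℕ} (C : (Fin d → ℝ) → ℝ) : Prop :=
  IsCopula C ∧ ∀ s : ℝ, 0 < s → ∀ u ∈ unitBox d, (C fun j => u j ^ (1/s)) ^ s = C u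

/-- The covariance kernel `γ(v,u,c,a)` of the sliding-blocks limit process. -/
def gammaSl {d : ℕ} (C : (Fin d → ℝ) → ℝ) (v u : Fin d → ℝ) (c a : ℝ) : ℝ :=
  (∫ ξ in (-a)..0,
      C (fun j => u j ^ (1/a)) ^ (-ξ) *
      C (fun j => min (v j ^ (1/c)) (u j ^ (1/a))) ^ (ξ + a) *
      C (fun j => v j ^ (1/c)) ^ (c - ξ - a)) +
  (∫ _ξ in (0:ℝ)..(c - a),
      C (fun j => v j ^ (1/c)) ^ (c - a) *
      C (fun j => min (v j ^ (1/c)) (u j ^ (1/a))) ^ a) +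
  (∫ ξ in (c - a)..c,
      C (fun j => v j ^ (1/c)) ^ ξ *
      C (fun j => min (v j ^ (1/c)) (u j ^ (1/a))) ^ (c - ξ) *
      C (fun j => u j ^ (1/a)) ^ (ξ + a - c)) -
  (c + a) * C v * C u

/-- The covariance kernel `γ^D(u,v)` of the disjoint-blocks limit process. -/
def gammaD {d : ℕ} (C : (Fin d → ℝ) → ℝ) (u v : Fin d → ℝ) : ℝ :=
  C (fun j => min (u j) (v j)) - C u * C v


/-- The matrix of covariances of indicators of events is positive semidefinite. -/
lemma posSemidef_measure_inter {Ω : Type*} [MeasurableSpace Ω] (μ : Measure Ω)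
    [IsProbabilityMeasure μ] {N : ℕ} (A : Fin N → Set Ω) (hA : ∀ i, MeasurableSet (A i)) :
    (Matrix.of fun i j : Fin N => μ.real (A i ∩ A j) - μ.real (A i) * μ.real (A j)).PosSemidef := by
  have hmem : ∀ i, MemLp ((A i).indicator (fun _ => (1 : ℝ))) 2 μ := fun i =>
    memLp_indicator_const 2 (hA i) 1 (Or.inr (measure_ne_top μ _))
  have hcov : ∀ i j, μ.real (A i ∩ A j) - μ.real (A i) * μ.real (A j) =
      ProbabilityTheory.covariance ((A i).indicator (fun _ => (1 : ℝ)))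
        ((A j).indicator (fun _ => (1 : ℝ))) μ := by
    intro i j
    rw [ProbabilityTheory.covariance_eq_sub (hmem i) (hmem j)]
    have h1 : (A i).indicator (fun _ => (1 : ℝ)) * (A j).indicator (fun _ => (1 : ℝ)) =
        (A i ∩ A j).indicator (fun _ => (1 : ℝ)) := by
      ext ω
      simp [← Set.inter_indicator_mul]
    rw [h1, integral_indicator_const _ (hA i), integral_indicator_const _ (hA j),
      integral_indicator_const _ ((hA i).inter (hA j))]
    simp
  refine Matrix.PosSemidef.of_dotProduct_mulVec_nonneg ?_ fun x => ?_
  · ext i j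
    simp [Matrix.conjTranspose_apply, Set.inter_comm, mul_comm]
  · have h := ProbabilityTheory.variance_nonneg
      (fun ω => ∑ i, x i * (A i).indicator (fun _ => (1 : ℝ)) ω) μ
    have hm : ∀ i, MemLp (fun ω => x i * (A i).indicator (fun _ => (1 : ℝ)) ω) 2 μ :=
      fun i => (hmem i).const_mul (x i)
    rw [← ProbabilityTheory.covariance_self
      (memLp_finsetSum Finset.univ fun i _ => hm i).aestronglyMeasurable.aemeasurable,
      ProbabilityTheory.covariance_fun_sum_fun_sum hm hm] at h
    refine h.trans_eq (Eq.symm ?_)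
    simp only [dotProduct, Matrix.mulVec, Matrix.of_apply, Finset.mul_sum, hcov]
    refine Finset.sum_congr rfl fun i _ => Finset.sum_congr rfl fun j _ => ?_
    rw [ProbabilityTheory.covariance_const_mul_left, ProbabilityTheory.covariance_const_mul_right, star_trivial]
    ring

lemma min_mem_unitBox {d : ℕ} {u v : Fin d → ℝ} (hu : u ∈ unitBox d) (hv : v ∈ unitBox d) :
    (fun j => min (u j) (v j)) ∈ unitBox d :=
  fun j => ⟨le_min (hu j).1 (hv j).1, (min_le_left _ _).trans (hu j).2⟩

lemma rpow_mem_unitBox {d : ℕ} {u : Fin d → ℝ} (hu : u ∈ unitBox d) {s : ℝ} (hs : 0 ≤ s) :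
    (fun j => u j ^ s) ∈ unitBox d :=
  fun j => ⟨Real.rpow_nonneg (hu j).1 s, Real.rpow_le_one (hu j).1 (hu j).2 hs⟩

lemma IsCopula.mem_Icc {d : ℕ} {C : (Fin d → ℝ) → ℝ} (hC : IsCopula C) {u : Fin d → ℝ}
    (hu : u ∈ unitBox d) : C u ∈ Set.Icc (0 : ℝ) 1 := by
  obtain ⟨μ, _, -, h, -⟩ := hC
  rw [h u hu]
  exact ⟨measureReal_nonneg, measureReal_le_one⟩

/-- The covariance matrix of the indicators of the lower orthants `{x | x ≤ u i}` under the law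
with distribution function `C`. -/
lemma posSemidef_copula {d : ℕ} {C : (Fin d → ℝ) → ℝ} (hC : IsCopula C) {N : ℕ}
    (u : Fin N → Fin d → ℝ) (hu : ∀ i, u i ∈ unitBox d) :
    (Matrix.of fun i j : Fin N =>
      C (fun k => min (u i k) (u j k)) - C (u i) * C (u j)).PosSemidef := by
  obtain ⟨μ, _, -, h, -⟩ := hC
  convert posSemidef_measure_inter μ (fun i => {x | ∀ k, x k ≤ u i k})
    (fun i => measurableSet_Iic (a := u i)) using 2
  ext i j
  congr 1
  · rw [h _ (min_mem_unitBox (hu i) (hu j)), Measure.real]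
    congr 2
    ext x
    simp [forall_and]
  · rw [h _ (hu i), h _ (hu j)]
    rfl

lemma IsEVCopula.apply_rpow {d : ℕ} {C : (Fin d → ℝ) → ℝ} (hC : IsEVCopula C) {u : Fin d → ℝ}
    (hu : u ∈ unitBox d) {s : ℝ} (hs : 0 < s) : C (fun j => u j ^ s) = C u ^ s := by
  have h := hC.2 (1 / s) (by positivity) u hu
  simp only [one_div, inv_inv] at h
  rw [← h, Real.rpow_inv_rpow (hC.1.mem_Icc (rpow_mem_unitBox hu hs.le)).1 hs.ne']

/-- By max-stability, for `s > 0` the entries are again covariances, now at the points `(u i)^s`;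
for `s = 0` the matrix vanishes. -/
lemma posSemidef_rpow {d : ℕ} {C : (Fin d → ℝ) → ℝ} (hC : IsEVCopula C) {N : ℕ}
    (u : Fin N → Fin d → ℝ) (hu : ∀ i, u i ∈ unitBox d) {s : ℝ} (hs : 0 ≤ s) :
    (Matrix.of fun i j : Fin N =>
      C (fun k => min (u i k) (u j k)) ^ s - (C (u i) * C (u j)) ^ s).PosSemidef := by
  rcases hs.eq_or_lt with rfl | hs
  · convert Matrix.PosSemidef.zero (n := Fin N) (R := ℝ) using 1
    ext i j
    simp
  · convert posSemidef_copula hC.1 (fun i k => u i k ^ s)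
      (fun i => rpow_mem_unitBox (hu i) hs.le) using 2
    ext i j
    rw [hC.apply_rpow (hu i) hs, hC.apply_rpow (hu j) hs,
      Real.mul_rpow (hC.1.mem_Icc (hu i)).1 (hC.1.mem_Icc (hu j)).1,
      ← hC.apply_rpow (min_mem_unitBox (hu i) (hu j)) hs]
    congr 3
    ext k
    exact (Real.monotoneOn_rpow_Ici_of_exponent_nonneg hs.le).map_min (hu i k).1 (hu j k).1

lemma posSemidef_integral {N : ℕ} (M : ℝ → Matrix (Fin N) (Fin N) ℝ)
    (hM : ∀ s ∈ Set.Icc (0 : ℝ) 1, (M s).PosSemidef)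
    (hint : ∀ i j, IntervalIntegrable (fun s => M s i j) volume 0 1) :
    (Matrix.of fun i j : Fin N => ∫ s in (0 : ℝ)..1, M s i j).PosSemidef := by
  refine Matrix.PosSemidef.of_dotProduct_mulVec_nonneg ?_ fun x => ?_
  · ext i j
    simp only [Matrix.conjTranspose_apply, Matrix.of_apply, star_trivial]
    refine intervalIntegral.integral_congr fun s hs => ?_
    rw [Set.uIcc_of_le zero_le_one] at hs
    simpa using (hM s hs).1.apply i j
  · have h : 0 ≤ ∫ s in (0 : ℝ)..1, ∑ i, ∑ j, x i * (M s i j * x j) := by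
      refine intervalIntegral.integral_nonneg zero_le_one fun s hs => ?_
      simpa [dotProduct, Matrix.mulVec, Finset.mul_sum] using
        (hM s hs).dotProduct_mulVec_nonneg x
    have hij : ∀ i j, IntervalIntegrable (fun s => x i * (M s i j * x j)) volume 0 1 :=
      fun i j => ((hint i j).mul_const (x j)).const_mul (x i)
    have hi : ∀ i, IntervalIntegrable (fun s => ∑ j, x i * (M s i j * x j)) volume 0 1 :=
      fun i => by
        simpa only [Finset.sum_fn] using IntervalIntegrable.sum Finset.univ fun j _ => hij i j
    rw [intervalIntegral.integral_finsetSum fun i _ => hi i] at h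
    refine h.trans_eq (Eq.symm ?_)
    simp only [dotProduct, Matrix.mulVec, Matrix.of_apply, Finset.mul_sum, star_trivial]
    refine Finset.sum_congr rfl fun i _ => ?_
    rw [intervalIntegral.integral_finsetSum fun j _ => hij i j]
    refine Finset.sum_congr rfl fun j _ => ?_
    rw [intervalIntegral.integral_const_mul, intervalIntegral.integral_mul_const]

/-- Integrability comes from boundedness, since the integrand jumps at an end point when `p` or
`w` vanishes. -/
lemma intervalIntegrable_rpow_mul_rpow {p w : ℝ} (hp : p ∈ Set.Icc (0 : ℝ) 1)
    (hw : w ∈ Set.Icc (0 : ℝ) 1) :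
    IntervalIntegrable (fun s : ℝ => p ^ s * w ^ (1 - s)) volume 0 1 := by
  rw [intervalIntegrable_iff, Set.uIoc_of_le zero_le_one]
  refine Measure.integrableOn_of_bounded (M := 1) (by simp)
    (by fun_prop : Measurable fun s : ℝ => p ^ s * w ^ (1 - s)).aestronglyMeasurable ?_
  refine (ae_restrict_iff' measurableSet_Ioc).2 (ae_of_all _ fun s hs => ?_)
  have h1 := Real.rpow_nonneg hp.1 s
  have h2 := Real.rpow_nonneg hw.1 (1 - s)
  rw [Real.norm_of_nonneg (mul_nonneg h1 h2)]
  exact mul_le_one₀ (Real.rpow_le_one hp.1 hp.2 hs.1.le) h2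
    (Real.rpow_le_one hw.1 hw.2 (by linarith [hs.2]))

/-- The kernel for `c = a = 1`: the two outer integrals reduce to the same one, and the
middle integral runs over a degenerate interval. -/
lemma gammaSl_one_one {d : ℕ} {C : (Fin d → ℝ) → ℝ} (hC : IsCopula C) {u v : Fin d → ℝ}
    (hu : u ∈ unitBox d) (hv : v ∈ unitBox d) :
    gammaSl C v u 1 1 =
      2 * (∫ s in (0 : ℝ)..1, (C u * C v) ^ s * C (fun j => min (u j) (v j)) ^ (1 - s)) -
        2 * (C u * C v) := by
  have hCu := (hC.mem_Icc hu).1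
  have hCv := (hC.mem_Icc hv).1
  have h1 : (∫ ξ in (-1 : ℝ)..0, C u ^ (-ξ) * C (fun j => min (v j) (u j)) ^ (ξ + 1) *
      C v ^ (1 - ξ - 1)) =
      ∫ s in (0 : ℝ)..1, (C u * C v) ^ s * C (fun j => min (u j) (v j)) ^ (1 - s) := by
    have h := intervalIntegral.integral_comp_neg (a := -1) (b := 0)
      (fun s : ℝ => (C u * C v) ^ s * C (fun j => min (u j) (v j)) ^ (1 - s))
    rw [neg_zero, neg_neg] at h
    rw [← h]
    refine intervalIntegral.integral_congr fun ξ _ => ?_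
    simp only [min_comm (v _) (u _)]
    rw [Real.mul_rpow hCu hCv, show 1 - ξ - 1 = -ξ by ring, show 1 - -ξ = ξ + 1 by ring]
    ring
  have h2 : (∫ ξ in (0 : ℝ)..1, C v ^ ξ * C (fun j => min (v j) (u j)) ^ (1 - ξ) *
      C u ^ (ξ + 1 - 1)) =
      ∫ s in (0 : ℝ)..1, (C u * C v) ^ s * C (fun j => min (u j) (v j)) ^ (1 - s) := by
    refine intervalIntegral.integral_congr fun ξ _ => ?_
    simp only [min_comm (v _) (u _)]
    rw [Real.mul_rpow hCu hCv, show ξ + 1 - 1 = ξ by ring]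
    ring
  simp only [gammaSl, div_one, Real.rpow_one, sub_self, intervalIntegral.integral_same, h1, h2]
  ring

/-- The symmetrized form of `w + p - 2 ∫₀¹ p^s w^(1-s) ds`. -/
lemma integral_symmetrized {p w : ℝ} (hp : p ∈ Set.Icc (0 : ℝ) 1) (hw : w ∈ Set.Icc (0 : ℝ) 1) :
    IntervalIntegrable (fun s : ℝ => (w ^ s - p ^ s) * (w ^ (1 - s) - p ^ (1 - s))) volume 0 1 ∧
    ∫ s in (0 : ℝ)..1, (w ^ s - p ^ s) * (w ^ (1 - s) - p ^ (1 - s)) =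
      w + p - 2 * ∫ s in (0 : ℝ)..1, p ^ s * w ^ (1 - s) := by
  have heq : Set.EqOn (fun s : ℝ => w + p - p ^ s * w ^ (1 - s) - w ^ s * p ^ (1 - s))
      (fun s : ℝ => (w ^ s - p ^ s) * (w ^ (1 - s) - p ^ (1 - s))) (Set.uIcc 0 1) := by
    intro s hs
    rw [Set.uIcc_of_le zero_le_one] at hs
    have hs' : 0 ≤ 1 - s := by linarith [hs.2]
    have ew : w ^ s * w ^ (1 - s) = w := by
      rw [← Real.rpow_add_of_nonneg hw.1 hs.1 hs']; simp
    have ep : p ^ s * p ^ (1 - s) = p := by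
      rw [← Real.rpow_add_of_nonneg hp.1 hs.1 hs']; simp
    simp only
    linear_combination -ew - ep
  have i1 := intervalIntegrable_rpow_mul_rpow hp hw
  have i2 := intervalIntegrable_rpow_mul_rpow hw hp
  have i0 : IntervalIntegrable (fun _ : ℝ => w + p) volume 0 1 := intervalIntegrable_const
  have hsymm : ∫ s in (0 : ℝ)..1, w ^ s * p ^ (1 - s) =
      ∫ s in (0 : ℝ)..1, p ^ s * w ^ (1 - s) := by
    have h := intervalIntegral.integral_comp_sub_left (a := 0) (b := 1)
      (fun s : ℝ => p ^ s * w ^ (1 - s)) 1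
    rw [sub_self, sub_zero] at h
    rw [← h]
    refine intervalIntegral.integral_congr fun s _ => ?_
    simp only [sub_sub_cancel]
    ring
  refine ⟨((i0.sub i1).sub i2).congr (heq.mono Set.uIoc_subset_uIcc), ?_⟩
  rw [← intervalIntegral.integral_congr heq, intervalIntegral.integral_sub (i0.sub i1) i2,
    intervalIntegral.integral_sub i0 i1, hsymm]
  simp
  ring

/-- the limiting covariance matrix of the sliding-blocks empirical process
(known margins) is dominated in the Loewner order by that of the disjoint-blocks process. -/
theorem statement0 {d : ℕ} (C : (Fin d → ℝ) → ℝ)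
    (hC : IsEVCopula C)
    (Cdot : Fin d → (Fin d → ℝ) → ℝ)
    (hderiv : ∀ j : Fin d, ∀ u ∈ unitBox d, u j ∈ Set.Ioo (0:ℝ) 1 →
      HasDerivAt (fun t => C (Function.update u j t)) (Cdot j u) (u j))
    (hcont : ∀ j : Fin d,
      ContinuousOn (Cdot j) {u | u ∈ unitBox d ∧ u j ∈ Set.Ioo (0:ℝ) 1})
    (N : ℕ) (u : Fin N → Fin d → ℝ) (hu : ∀ i, u i ∈ unitBox d) :
    (Matrix.of fun i j : Fin N =>
      gammaD C (u i) (u j) - gammaSl C (u j) (u i) 1 1).PosSemidef := by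
  have hp : ∀ i j, C (u i) * C (u j) ∈ Set.Icc (0 : ℝ) 1 := fun i j =>
    have hi := hC.1.mem_Icc (hu i)
    have hj := hC.1.mem_Icc (hu j)
    ⟨mul_nonneg hi.1 hj.1, mul_le_one₀ hi.2 hj.1 hj.2⟩
  have hw : ∀ i j, C (fun k => min (u i k) (u j k)) ∈ Set.Icc (0 : ℝ) 1 := fun i j =>
    hC.1.mem_Icc (min_mem_unitBox (hu i) (hu j))
  have key := posSemidef_integral
    (fun s => Matrix.hadamard
      (Matrix.of fun i j : Fin N =>
        C (fun k => min (u i k) (u j k)) ^ s - (C (u i) * C (u j)) ^ s)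
      (Matrix.of fun i j : Fin N =>
        C (fun k => min (u i k) (u j k)) ^ (1 - s) - (C (u i) * C (u j)) ^ (1 - s)))
    (fun s hs => (posSemidef_rpow hC u hu hs.1).hadamard
      (posSemidef_rpow hC u hu (sub_nonneg.2 hs.2)))
    (fun i j => (integral_symmetrized (hp i j) (hw i j)).1)
  convert key using 2
  ext i j
  simp only [Matrix.hadamard_apply, Matrix.of_apply]
  rw [(integral_symmetrized (hp i j) (hw i j)).2, gammaSl_one_one hC.1 (hu i) (hu j), gammaD]
  ring
end
end

section
/- Let C be a d-dimensional copula and for m ∈ ℕ set C_m(u) := C(u^{1/m})^m (the copula of the componentwise maximum of m i.i.d. random vectors with copula C and continuous margins). Suppose the second order condition holds for (C_m) with limit C_∞, auxiliary function φ regularly varying of index ρ_φ < 0 and limit function S, and suppose C_∞(u) > 0 for all u ∈ (0,1]^d. Suppose in addition there exist a function ψ : ℕ → (0,∞) with ψ(k) → 0 and a function T : [0,1]^d → ℝ, not identically zero, such that (1/ψ(k))·[(C_k(u) − C_∞(u))/φ(k) − S(u)] → T(u) uniformly in u ∈ [0,1]^d as k → ∞. If the functions S, T and u ↦ S(u)²/C_∞(u)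 are linearly independent on (0,1]^d, then ψ is regularly varying of some order ρ_ψ ≤ 0; that is, there exists ρ_ψ ≤ 0 such that for every x > 0, ψ(⌊xk⌋)/ψ(k) → x^{ρ_ψ} as k → ∞. -/
/-!
Block maxima of different sizes are linked by the exact relation `C_n(u) = C_k(u^{k/n})^{n/k}`
(`Cm_stable`). Let `n, k → ∞` with `y = n / k → x > 0`, and write `v = u^{1/y}`. Passing to the
limit shows that `C_∞` is max-stable (`Expansion.maxStable`), and expanding `c ↦ c ^ y` around
`C_∞(v)` to second order (`Expansion.expand`) shows that `φ n / φ k → x ^ ρ` for all such sequences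
and that `x ^ ρ S(u) = x C_∞(u^{1/x}) ^ (x - 1) S(u^{1/x})` (`Expansion.ratio`,
`Expansion.S_hom`). Inserting the third order expansion on both sides and using this
homogeneity exactly at `y` leaves, for each `u ∈ (0,1]^d`, a relation

  `a S(u) + b (T(u) + o(1)) = ψ k (W_x(u) + o(1)) + e (r S(u)² / C_∞(u) + o(1))`,

with `a = φ n / φ k - y ^ ρ`, `b = (φ n / φ k) ψ n`, `e = (y - 1) φ k`, `r > 0` and
`W_x(u) = x C_∞(u^{1/x}) ^ (x - 1) T(u^{1/x})`. The Lagrange remainder carries the factor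
`y - 1`, so the relation holds in this form at `x = 1` too. By linear independence of `S`, `T` and
`S² / C_∞`, finite linear combinations over points `u` isolate the coefficients `b` and `e`
(`exists_comb`). Solving the resulting two equations gives convergence of `b / ψ k`, hence of
`ψ n / ψ k`, to a limit `G x` which depends only on `x` and is continuous
(`Expansion.exists_limit`). Composing ratios shows that `G` is multiplicative, so it is a power, and
`ψ → 0` rules out a positive exponent (`regVar_of_limit`).
-/


open MeasureTheory Filter Set

noncomputable section

/-- `φ` is regularly varying (along the integers) with index `ρ`. -/
def RegVar (φ : ℕ → ℝ) (ρ : ℝ) : Prop :=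
  ∀ x : ℝ, 0 < x → Tendsto (fun k : ℕ => φ ⌊x * (k:ℝ)⌋₊ / φ k) atTop (nhds (x ^ ρ))

/-- The second order condition: `sup_u |C_m(u) − C_∞(u) − φ(m) S(u)| = o(φ(m))` with `φ`
regularly varying of negative index and `S` continuous and not identically zero. -/
def SecondOrderCond {d : ℕ} (C : ℕ → (Fin d → ℝ) → ℝ) (Cinf : (Fin d → ℝ) → ℝ)
    (φ : ℕ → ℝ) (ρφ : ℝ) (S : (Fin d → ℝ) → ℝ) : Prop :=
  (∀ m, 0 < φ m) ∧ ρφ < 0 ∧ RegVar φ ρφ ∧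
  ContinuousOn S (unitBox d) ∧ (∃ u ∈ unitBox d, S u ≠ 0) ∧
  TendstoUniformlyOn (fun m u => (C m u - Cinf u) / φ m) S atTop (unitBox d)

/-! ### Copulas and powers on the cube -/

/-- A copula is Lipschitz for the `ℓ¹` distance, because its margins are uniform. -/
theorem copula_le {d : ℕ} {C : (Fin d → ℝ) → ℝ} (hC : IsCopula C) {u v : Fin d → ℝ}
    (hu : u ∈ unitBox d) (hv : v ∈ unitBox d) : C u ≤ C v + ∑ j, |u j - v j| := by
  obtain ⟨μ, hμ, -, hCμ, hmarg⟩ := hC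
  have hmeas : ∀ (j : Fin d) (t : ℝ), MeasurableSet {x : Fin d → ℝ | x j ≤ t} := fun j t =>
    measurableSet_le (measurable_pi_apply j) measurable_const
  have hstrip : ∀ j, μ.real ({x | x j ≤ u j} \ {x | x j ≤ v j}) ≤ |u j - v j| := by
    intro j
    rcases le_total (v j) (u j) with h | h
    · have hss : {x : Fin d → ℝ | x j ≤ v j} ⊆ {x | x j ≤ u j} :=
        fun x (hx : x j ≤ v j) => hx.trans h
      rw [measureReal_sdiff hss (hmeas j _)]
      have h1 := hmarg j _ (hu j)
      have h2 := hmarg j _ (hv j)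
      rw [Measure.real, Measure.real, h1, h2]
      exact le_abs_self _
    · have : {x : Fin d → ℝ | x j ≤ u j} \ {x | x j ≤ v j} = ∅ :=
        Set.sdiff_eq_empty.2 fun x (hx : x j ≤ u j) => hx.trans h
      rw [this]; simp
  have hsub : {x : Fin d → ℝ | ∀ j, x j ≤ u j} ⊆
      {x | ∀ j, x j ≤ v j} ∪ ⋃ j, ({x | x j ≤ u j} \ {x | x j ≤ v j}) := by
    intro x hx
    by_cases h : ∀ j, x j ≤ v j
    · exact Or.inl h
    · push Not at h
      obtain ⟨j, hj⟩ := h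
      exact Or.inr (Set.mem_iUnion.2 ⟨j, hx j, not_le.2 hj⟩)
  rw [hCμ u hu, hCμ v hv]
  calc μ.real {x | ∀ j, x j ≤ u j} ≤ _ := measureReal_mono hsub
    _ ≤ _ := measureReal_union_le _ _
    _ ≤ _ := by
      gcongr
      · exact le_rfl
      · exact (measureReal_iUnion_fintype_le _).trans (Finset.sum_le_sum fun j _ => hstrip j)

theorem copula_continuousOn {d : ℕ} {C : (Fin d → ℝ) → ℝ} (hC : IsCopula C) :
    ContinuousOn C (unitBox d) := by
  intro u hu
  have h0 : Tendsto (fun v : Fin d → ℝ => ∑ j, |v j - u j|) (nhdsWithin u (unitBox d))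
      (nhds 0) := by
    have : Continuous fun v : Fin d → ℝ => ∑ j, |v j - u j| := by fun_prop
    have := this.tendsto u
    simp only [sub_self, abs_zero, Finset.sum_const_zero] at this
    exact this.mono_left nhdsWithin_le_nhds
  refine tendsto_iff_dist_tendsto_zero.2 (squeeze_zero' (Eventually.of_forall fun _ => dist_nonneg)
    ?_ h0)
  filter_upwards [self_mem_nhdsWithin] with v hv
  rw [Real.dist_eq, abs_le]
  have h1 := copula_le hC hu hv
  have h2 := copula_le hC hv hu
  simp only [abs_sub_comm (u _)] at h1
  constructor <;> linarith

theorem copula_nonneg {d : ℕ} {C : (Fin d → ℝ) → ℝ} (hC : IsCopula C) {u : Fin d → ℝ}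
    (hu : u ∈ unitBox d) : 0 ≤ C u := by
  obtain ⟨μ, hμ, -, hCμ, hmarg⟩ := hC
  rw [hCμ u hu]; exact ENNReal.toReal_nonneg

/-- The half-open cube `(0,1]^d`. -/
def posBox (d : ℕ) : Set (Fin d → ℝ) := {u | ∀ j, u j ∈ Set.Ioc (0:ℝ) 1}

/-- The componentwise root `u^{1/y}`. -/
def root {d : ℕ} (u : Fin d → ℝ) (y : ℝ) : Fin d → ℝ := fun j => u j ^ y⁻¹

theorem posBox_subset (d : ℕ) : posBox d ⊆ unitBox d := fun _ hu j => ⟨(hu j).1.le, (hu j).2⟩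

theorem root_mem {d : ℕ} {u : Fin d → ℝ} (hu : u ∈ posBox d) {y : ℝ} (hy : 0 < y) :
    root u y ∈ posBox d := fun j =>
  ⟨Real.rpow_pos_of_pos (hu j).1 _, Real.rpow_le_one (hu j).1.le (hu j).2 (inv_pos.2 hy).le⟩

theorem root_continuousOn {d : ℕ} {u : Fin d → ℝ} (hu : u ∈ posBox d) :
    ContinuousOn (root u) (Set.Ioi 0) := by
  refine continuousOn_pi.2 fun j => ?_
  refine ContinuousOn.rpow continuousOn_const (continuousOn_inv₀.mono ?_) ?_
  · intro y hy; exact (ne_of_gt hy)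
  · intro y _; exact Or.inl (hu j).1.ne'

theorem root_tendsto {d : ℕ} {u : Fin d → ℝ} (hu : u ∈ posBox d) {y : ℕ → ℝ} {x : ℝ} (hx : 0 < x)
    (hy : Tendsto y atTop (nhds x)) :
    Tendsto (fun i => root u (y i)) atTop (nhdsWithin (root u x) (unitBox d)) := by
  refine tendsto_nhdsWithin_iff.2 ⟨?_, ?_⟩
  · exact (((root_continuousOn hu).continuousAt (Ioi_mem_nhds hx)).tendsto).comp hy
  · filter_upwards [hy.eventually_const_lt hx] with i hi
    exact posBox_subset d (root_mem hu hi)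

/-- The block-maxima copulas are related by `C_n(u) = C_k(u^{k/n})^{n/k}`. -/
theorem Cm_stable {d : ℕ} {C : (Fin d → ℝ) → ℝ} (hC : IsCopula C)
    {Cm : ℕ → (Fin d → ℝ) → ℝ}
    (hCm : ∀ m : ℕ, ∀ u ∈ unitBox d, Cm m u = (C fun j => u j ^ ((m:ℝ)⁻¹)) ^ (m:ℝ))
    {n k : ℕ} (hn : 0 < n) (hk : 0 < k) {u : Fin d → ℝ} (hu : u ∈ posBox d) :
    Cm n u = Cm k (root u (n / k : ℝ)) ^ (n / k : ℝ) := by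
  have hn' : (0:ℝ) < n := by exact_mod_cast hn
  have hk' : (0:ℝ) < k := by exact_mod_cast hk
  have hr := root_mem hu (div_pos hn' hk')
  rw [hCm n u (posBox_subset d hu), hCm k _ (posBox_subset d hr)]
  have : (fun j => root u (n / k : ℝ) j ^ ((k:ℝ)⁻¹)) = fun j => u j ^ ((n:ℝ)⁻¹) := by
    funext j
    rw [root, ← Real.rpow_mul (hu j).1.le]
    congr 1
    field_simp
  have hr2 : 0 ≤ C fun j => u j ^ ((n:ℝ)⁻¹) := copula_nonneg hC (posBox_subset d (root_mem hu hn'))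
  rw [this, ← Real.rpow_mul hr2]
  congr 1
  field_simp

theorem Cm_continuousOn {d : ℕ} {C : (Fin d → ℝ) → ℝ} (hC : IsCopula C)
    {Cm : ℕ → (Fin d → ℝ) → ℝ}
    (hCm : ∀ m : ℕ, ∀ u ∈ unitBox d, Cm m u = (C fun j => u j ^ ((m:ℝ)⁻¹)) ^ (m:ℝ)) (m : ℕ) :
    ContinuousOn (Cm m) (unitBox d) := by
  have hm : (0:ℝ) ≤ (m:ℝ)⁻¹ := by positivity
  refine ContinuousOn.congr ?_ (hCm m)
  refine ContinuousOn.rpow_const ?_ fun _ _ => Or.inr (Nat.cast_nonneg m)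
  refine (copula_continuousOn hC).comp ?_ ?_
  · exact (continuous_pi fun j =>
      (Real.continuous_rpow_const hm).comp (continuous_apply j)).continuousOn
  · intro u hu j
    exact ⟨Real.rpow_nonneg (hu j).1 _, Real.rpow_le_one (hu j).1 (hu j).2 hm⟩

/-! ### Analytic preliminaries -/

/-- A regularly varying sequence of negative index tends to zero. Only the ratio
`φ ⌊k/2⌋ / φ k` is used: its limit exceeds `1`, so `φ` contracts along repeated halving. -/
theorem RegVar.tendsto_zero {φ : ℕ → ℝ} {ρ : ℝ} (hφ : ∀ m, 0 < φ m) (hρ : ρ < 0)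
    (h : RegVar φ ρ) : Tendsto φ atTop (nhds 0) := by
  have h1 : (1:ℝ) < (1/2 : ℝ) ^ ρ :=
    Real.one_lt_rpow_of_pos_of_lt_one_of_neg (by norm_num) (by norm_num) hρ
  obtain ⟨q, hq1, hq⟩ := exists_between h1
  have hq0 : 0 < q := one_pos.trans hq1
  have hev : ∀ᶠ k : ℕ in atTop, φ k ≤ q⁻¹ * φ (k / 2) := by
    filter_upwards [(h (1/2) (by norm_num)).eventually_const_lt hq] with k hk
    have hfl : ⌊(1/2 : ℝ) * k⌋₊ = k / 2 := by
      rw [← Nat.floor_div_eq_div (K := ℝ) k 2]; congr 1; push_cast; ring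
    rw [hfl, lt_div_iff₀ (hφ k)] at hk
    rw [inv_mul_eq_div, le_div_iff₀ hq0]
    linarith
  obtain ⟨N, hN⟩ := eventually_atTop.1 hev
  obtain ⟨B, hB⟩ : ∃ B, ∀ k < N + 1, φ k ≤ B := by
    refine ⟨∑ i ∈ Finset.range (N + 1), φ i, fun k hk => ?_⟩
    exact Finset.single_le_sum (f := φ) (fun i _ => (hφ i).le) (Finset.mem_range.2 hk)
  have hB0 : 0 < B := (hφ 0).trans_le (hB 0 (by omega))
  have hbd : ∀ k, φ k ≤ B := by
    intro k
    induction k using Nat.strong_induction_on with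
    | _ k ih =>
      by_cases hk : k < N + 1
      · exact hB k hk
      · have := hN k (by omega)
        have h2 := ih (k / 2) (by omega)
        have h3 : q⁻¹ * φ (k / 2) ≤ 1 * φ (k / 2) := by
          have := (hφ (k/2)).le
          gcongr
          exact inv_le_one_of_one_le₀ hq1.le
        linarith
  have hpow : ∀ j : ℕ, ∀ᶠ k : ℕ in atTop, φ k ≤ q⁻¹ ^ j * B := by
    intro j
    induction j with
    | zero => exact Eventually.of_forall fun k => by simpa using hbd k
    | succ j ih =>
      have hhalf : Tendsto (fun k : ℕ => k / 2) atTop atTop :=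
        Nat.tendsto_div_const_atTop (by norm_num)
      filter_upwards [hev, hhalf.eventually ih] with k h1 h2
      calc φ k ≤ q⁻¹ * φ (k / 2) := h1
        _ ≤ q⁻¹ * (q⁻¹ ^ j * B) := by gcongr
        _ = _ := by ring
  have hlim : Tendsto (fun j : ℕ => q⁻¹ ^ j * B) atTop (nhds 0) := by
    have := (tendsto_pow_atTop_nhds_zero_of_lt_one (inv_pos.2 hq0).le
      (inv_lt_one_of_one_lt₀ hq1)).mul_const B
    simpa using this
  refine tendsto_order.2 ⟨fun a ha => Eventually.of_forall fun k => ha.trans (hφ k), fun a ha => ?_⟩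
  obtain ⟨j, hj⟩ := (hlim.eventually_lt_const ha).exists
  filter_upwards [hpow j] with k hk
  exact hk.trans_lt hj

theorem isCompact_unitBox (d : ℕ) : IsCompact (unitBox d) := by
  have : unitBox d = Set.pi Set.univ fun _ => Set.Icc (0:ℝ) 1 := by
    ext u; simp only [unitBox, Set.mem_ofPred_eq, Set.mem_univ_pi]
  rw [this]; exact isCompact_univ_pi fun _ => isCompact_Icc

/-- Uniform convergence of `(F m - G) / φ m` to a continuous, hence bounded, limit with `φ → 0`
forces `F m → G` uniformly. -/
theorem unif_of_scaled {d : ℕ} {F : ℕ → (Fin d → ℝ) → ℝ} {G S : (Fin d → ℝ) → ℝ} {φ : ℕ → ℝ}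
    (hφ : ∀ m, 0 < φ m) (hφ0 : Tendsto φ atTop (nhds 0)) (hS : ContinuousOn S (unitBox d))
    (h : TendstoUniformlyOn (fun m u => (F m u - G u) / φ m) S atTop (unitBox d)) :
    TendstoUniformlyOn F G atTop (unitBox d) := by
  obtain ⟨B, hB⟩ := (isCompact_unitBox d).exists_bound_of_continuousOn hS
  rw [Metric.tendstoUniformlyOn_iff] at h ⊢
  intro ε hε
  have hlim : Tendsto (fun m => φ m * (|B| + 1)) atTop (nhds 0) := by
    simpa using hφ0.mul_const (|B| + 1)
  filter_upwards [h 1 one_pos, hlim.eventually_lt_const hε] with m h1 h2 u hu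
  have h3 := h1 u hu
  have h4 := hB u hu
  rw [Real.dist_eq] at h3 ⊢
  rw [Real.norm_eq_abs] at h4
  have h5 : |(F m u - G u) / φ m| ≤ |B| + 1 := by
    have := abs_sub_abs_le_abs_sub ((F m u - G u) / φ m) (S u)
    rw [abs_sub_comm] at this
    linarith [le_abs_self B]
  rw [abs_div, abs_of_pos (hφ m), div_le_iff₀ (hφ m)] at h5
  rw [abs_sub_comm]
  linarith

theorem unif_comp {d : ℕ} {F : ℕ → (Fin d → ℝ) → ℝ} {G : (Fin d → ℝ) → ℝ}
    (h : TendstoUniformlyOn F G atTop (unitBox d)) (hG : ContinuousOn G (unitBox d))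
    {k : ℕ → ℕ} (hk : Tendsto k atTop atTop) {v : ℕ → Fin d → ℝ} {w : Fin d → ℝ}
    (hw : w ∈ unitBox d) (hv : Tendsto v atTop (nhdsWithin w (unitBox d))) :
    Tendsto (fun i => F (k i) (v i)) atTop (nhds (G w)) := by
  have : TendstoUniformlyOn (fun i => F (k i)) G atTop (unitBox d) :=
    fun U hU => hk.eventually (h U hU)
  exact this.tendsto_comp (hG w hw) hv

/-- Second order Taylor expansion of `c ↦ c ^ y` with a Lagrange remainder that carries
the factor `y - 1`. -/
theorem rpow_taylor {c c' : ℝ} (hc : 0 < c) (hc' : 0 < c') (y : ℝ) :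
    ∃ ξ ∈ Set.uIcc c c', c' ^ y = c ^ y + y * c ^ (y - 1) * (c' - c) +
      y * (y - 1) / 2 * ξ ^ (y - 2) * (c' - c) ^ 2 := by
  rcases eq_or_ne c c' with rfl | hne
  · exact ⟨c, by simp, by simp⟩
  have hpos : ∀ t ∈ Set.uIcc c c', 0 < t := fun t ht =>
    (lt_min hc hc').trans_le ht.1
  have hcd : ContDiffOn ℝ (1 + 1 : ℕ) (fun t : ℝ => t ^ y) (Set.uIcc c c') := fun t ht =>
    (Real.contDiffAt_rpow_const_of_ne (hpos t ht).ne').contDiffWithinAt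
  obtain ⟨ξ, hξ, h⟩ := taylor_mean_remainder_lagrange_iteratedDeriv (n := 1) hne hcd
  have hξ' : ξ ∈ Set.uIcc c c' := Set.Ioo_subset_Icc_self hξ
  refine ⟨ξ, hξ', ?_⟩
  have hd1 : ∀ t, 0 < t → deriv (fun t : ℝ => t ^ y) t = y * t ^ (y - 1) := fun t ht =>
    (Real.hasDerivAt_rpow_const (Or.inl ht.ne')).deriv
  have hd2 : iteratedDeriv 2 (fun t : ℝ => t ^ y) ξ = y * (y - 1) * ξ ^ (y - 2) := by
    rw [iteratedDeriv_succ, iteratedDeriv_one]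
    have : deriv (fun t : ℝ => t ^ y) =ᶠ[nhds ξ] fun t => y * t ^ (y - 1) := by
      filter_upwards [Ioi_mem_nhds (hpos ξ hξ')] with t ht using hd1 t ht
    rw [this.deriv_eq]
    have := ((Real.hasDerivAt_rpow_const (p := y - 1) (Or.inl (hpos ξ hξ').ne')).const_mul y).deriv
    rw [this]; ring_nf
  have hw : derivWithin (fun t : ℝ => t ^ y) (Set.uIcc c c') c = y * c ^ (y - 1) :=
    ((Real.hasDerivAt_rpow_const (Or.inl hc.ne')).hasDerivWithinAt).derivWithin
      (uniqueDiffOn_uIcc hne c Set.left_mem_uIcc)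
  rw [show 1 + 1 = 2 from rfl, hd2, taylorWithinEval_succ, taylor_within_zero_eval,
    iteratedDerivWithin_one, hw] at h
  norm_num [Nat.factorial] at h
  linarith

/-! ### Second order: stability and homogeneity of the limits -/

/-- The consequences of the hypotheses of the second order expansion that the argument uses:
the stability relation between block sizes, positivity and continuity of the limits,
and the uniform convergences `C_m → C_∞` and `(C_m - C_∞) / φ m → S`. -/
structure Expansion {d : ℕ} (Cm : ℕ → (Fin d → ℝ) → ℝ) (Cinf : (Fin d → ℝ) → ℝ)
    (φ : ℕ → ℝ) (ρ : ℝ) (S : (Fin d → ℝ) → ℝ) : Prop where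
  stab : ∀ n k : ℕ, 0 < n → 0 < k → ∀ u ∈ posBox d,
    Cm n u = Cm k (root u (n / k : ℝ)) ^ (n / k : ℝ)
  φ_pos : ∀ m, 0 < φ m
  φ_zero : Tendsto φ atTop (nhds 0)
  reg : RegVar φ ρ
  Cinf_pos : ∀ u ∈ posBox d, 0 < Cinf u
  Cinf_cont : ContinuousOn Cinf (unitBox d)
  S_cont : ContinuousOn S (unitBox d)
  unif_C : TendstoUniformlyOn Cm Cinf atTop (unitBox d)
  unif_S : TendstoUniformlyOn (fun m u => (Cm m u - Cinf u) / φ m) S atTop (unitBox d)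
  S_ne : ∃ u ∈ posBox d, S u ≠ 0

/-- Two sequences of block sizes tending to infinity whose ratio `n / k` tends to `x`. -/
structure RatioTo (n k : ℕ → ℕ) (x : ℝ) : Prop where
  left : Tendsto n atTop atTop
  right : Tendsto k atTop atTop
  ratio : Tendsto (fun i => (n i : ℝ) / k i) atTop (nhds x)

theorem ratioTo_floor {x : ℝ} (hx : 0 < x) {k : ℕ → ℕ} (hk : Tendsto k atTop atTop) :
    RatioTo (fun i => ⌊x * (k i : ℝ)⌋₊) k x where
  left := tendsto_nat_floor_atTop.comp
    ((tendsto_natCast_atTop_atTop.comp hk).const_mul_atTop hx)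
  right := hk
  ratio := (tendsto_nat_floor_mul_div_atTop hx.le).comp (tendsto_natCast_atTop_atTop.comp hk)

theorem RatioTo.trans {n m k : ℕ → ℕ} {x y : ℝ} (h₁ : RatioTo n m x) (h₂ : RatioTo m k y) :
    RatioTo n k (x * y) where
  left := h₁.left
  right := h₂.right
  ratio := by
    refine (h₁.ratio.mul h₂.ratio).congr' ?_
    filter_upwards [h₁.right.eventually_ge_atTop 1] with i hi
    have : (m i : ℝ) ≠ 0 := by positivity
    field_simp

section
variable {d : ℕ} {Cm : ℕ → (Fin d → ℝ) → ℝ} {Cinf : (Fin d → ℝ) → ℝ}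
    {φ : ℕ → ℝ} {ρ : ℝ} {S : (Fin d → ℝ) → ℝ}

theorem Expansion.maxStable (E : Expansion Cm Cinf φ ρ S) {x : ℝ} (hx : 0 < x) {u : Fin d → ℝ}
    (hu : u ∈ posBox d) : Cinf u = Cinf (root u x) ^ x := by
  have hR := ratioTo_floor hx (k := fun i => i) tendsto_id
  have h1 : Tendsto (fun i : ℕ => Cm ⌊x * (i : ℝ)⌋₊ u) atTop (nhds (Cinf u)) :=
    (E.unif_C.tendsto_at (posBox_subset d hu)).comp hR.left
  have hr := root_mem hu hx
  have h2 := unif_comp E.unif_C E.Cinf_cont hR.right (posBox_subset d hr)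
    (root_tendsto hu hx hR.ratio)
  have h3 := h2.rpow hR.ratio (Or.inl (E.Cinf_pos _ hr).ne')
  refine tendsto_nhds_unique h1 (h3.congr' ?_)
  filter_upwards [hR.left.eventually_gt_atTop 0, hR.right.eventually_gt_atTop 0] with i h4 h5
  exact (E.stab _ _ h4 h5 u hu).symm

/-- Taylor expansion of the stability relation along block sizes with `n / k → x`:
the quadratic remainder carries the factor `n / k - 1`. -/
theorem Expansion.expand (E : Expansion Cm Cinf φ ρ S) {x : ℝ} (hx : 0 < x) {n k : ℕ → ℕ}
    (hR : RatioTo n k x) {u : Fin d → ℝ} (hu : u ∈ posBox d) :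
    ∃ R : ℕ → ℝ,
      Tendsto R atTop
        (nhds (x / 2 * Cinf (root u x) ^ (x - 2) * S (root u x) ^ 2)) ∧
      ∀ᶠ i in atTop, φ (n i) / φ (k i) * ((Cm (n i) u - Cinf u) / φ (n i)) =
        (n i / k i : ℝ) * Cinf (root u (n i / k i)) ^ ((n i / k i : ℝ) - 1) *
          ((Cm (k i) (root u (n i / k i)) - Cinf (root u (n i / k i))) / φ (k i)) +
        ((n i / k i : ℝ) - 1) * φ (k i) * R i := by
  have hr := root_mem hu hx
  have hrb := posBox_subset d hr
  have hv := root_tendsto hu hx hR.ratio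
  have hC : Tendsto (fun i => Cm (k i) (root u (n i / k i))) atTop (nhds (Cinf (root u x))) :=
    unif_comp E.unif_C E.Cinf_cont hR.right hrb hv
  have hCi : Tendsto (fun i => Cinf (root u (n i / k i))) atTop (nhds (Cinf (root u x))) :=
    (E.Cinf_cont _ hrb).tendsto.comp hv
  have hV := unif_comp E.unif_S E.S_cont hR.right hrb hv
  have hpos := E.Cinf_pos _ hr
  have hex : ∀ i, ∃ ξ : ℝ, 0 < Cinf (root u (n i / k i)) → 0 < Cm (k i) (root u (n i / k i)) →
      ξ ∈ Set.uIcc (Cinf (root u (n i / k i))) (Cm (k i) (root u (n i / k i))) ∧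
      Cm (k i) (root u (n i / k i)) ^ (n i / k i : ℝ) =
        Cinf (root u (n i / k i)) ^ (n i / k i : ℝ) +
        (n i / k i : ℝ) * Cinf (root u (n i / k i)) ^ ((n i / k i : ℝ) - 1) *
          (Cm (k i) (root u (n i / k i)) - Cinf (root u (n i / k i))) +
        (n i / k i : ℝ) * ((n i / k i : ℝ) - 1) / 2 * ξ ^ ((n i / k i : ℝ) - 2) *
          (Cm (k i) (root u (n i / k i)) - Cinf (root u (n i / k i))) ^ 2 := by
    intro i
    by_cases h : 0 < Cinf (root u (n i / k i)) ∧ 0 < Cm (k i) (root u (n i / k i))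
    · obtain ⟨ξ, h1, h2⟩ := rpow_taylor h.1 h.2 (n i / k i : ℝ)
      exact ⟨ξ, fun _ _ => ⟨h1, h2⟩⟩
    · exact ⟨0, fun h1 h2 => absurd ⟨h1, h2⟩ h⟩
  choose ξ hξ using hex
  have hev1 := hCi.eventually_const_lt hpos
  have hev2 := hC.eventually_const_lt hpos
  have hξlim : Tendsto ξ atTop (nhds (Cinf (root u x))) := by
    have hmin := hCi.min hC
    have hmax := hCi.max hC
    rw [min_self] at hmin
    rw [max_self] at hmax
    refine tendsto_of_tendsto_of_tendsto_of_le_of_le' hmin hmax ?_ ?_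
    · filter_upwards [hev1, hev2] with i h1 h2 using (hξ i h1 h2).1.1
    · filter_upwards [hev1, hev2] with i h1 h2 using (hξ i h1 h2).1.2
  refine ⟨fun i => (n i / k i : ℝ) / 2 * ξ i ^ ((n i / k i : ℝ) - 2) *
    ((Cm (k i) (root u (n i / k i)) - Cinf (root u (n i / k i))) / φ (k i)) ^ 2, ?_, ?_⟩
  · exact ((hR.ratio.div_const 2).mul
      (hξlim.rpow (hR.ratio.sub_const 2) (Or.inl hpos.ne'))).mul (hV.pow 2)
  · filter_upwards [hev1, hev2, hR.left.eventually_gt_atTop 0, hR.right.eventually_gt_atTop 0]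
      with i h1 h2 hn hk
    have hy : (0:ℝ) < n i / k i := by positivity
    have h3 := (hξ i h1 h2).2
    rw [← E.stab _ _ hn hk u hu, ← E.maxStable hy hu] at h3
    have hφn := (E.φ_pos (n i)).ne'
    have hφk := (E.φ_pos (k i)).ne'
    rw [div_mul_div_comm, mul_comm (φ (n i)), mul_div_mul_right _ _ hφn, div_eq_iff hφk, h3]
    generalize (n i / k i : ℝ) = y
    generalize Cm (k i) (root u y) - Cinf (root u y) = D
    field_simp
    ring

theorem Expansion.ratio_mul (E : Expansion Cm Cinf φ ρ S) {x : ℝ} (hx : 0 < x) {n k : ℕ → ℕ}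
    (hR : RatioTo n k x) {u : Fin d → ℝ} (hu : u ∈ posBox d) :
    Tendsto (fun i => φ (n i) / φ (k i) * ((Cm (n i) u - Cinf u) / φ (n i))) atTop
      (nhds (x * Cinf (root u x) ^ (x - 1) * S (root u x))) := by
  obtain ⟨R, hRlim, hev⟩ := E.expand hx hR hu
  have hr := root_mem hu hx
  have hrb := posBox_subset d hr
  have hv := root_tendsto hu hx hR.ratio
  have hCi : Tendsto (fun i => Cinf (root u (n i / k i))) atTop (nhds (Cinf (root u x))) :=
    (E.Cinf_cont _ hrb).tendsto.comp hv
  have hV := unif_comp E.unif_S E.S_cont hR.right hrb hv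
  have h1 := (hR.ratio.mul (hCi.rpow (hR.ratio.sub_const 1)
    (Or.inl (E.Cinf_pos _ hr).ne'))).mul hV
  have h2 := ((hR.ratio.sub_const 1).mul (E.φ_zero.comp hR.right)).mul hRlim
  have h3 := h1.add h2
  rw [mul_zero, zero_mul, add_zero] at h3
  exact h3.congr' (hev.mono fun i hi => hi.symm)

/-- Regular variation of `φ` upgrades from the sequences `⌊x k⌋` to arbitrary block sizes. -/
theorem Expansion.ratio (E : Expansion Cm Cinf φ ρ S) {x : ℝ} (hx : 0 < x) {n k : ℕ → ℕ}
    (hR : RatioTo n k x) : Tendsto (fun i => φ (n i) / φ (k i)) atTop (nhds (x ^ ρ)) := by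
  obtain ⟨u, hu, hne⟩ := E.S_ne
  have key : ∀ n k : ℕ → ℕ, RatioTo n k x → Tendsto (fun i => φ (n i) / φ (k i)) atTop
      (nhds (x * Cinf (root u x) ^ (x - 1) * S (root u x) / S u)) := by
    intro n k hR
    have hV : Tendsto (fun i => (Cm (n i) u - Cinf u) / φ (n i)) atTop (nhds (S u)) :=
      (E.unif_S.tendsto_at (posBox_subset d hu)).comp hR.left
    refine ((E.ratio_mul hx hR hu).div hV hne).congr' ?_
    filter_upwards [hV.eventually_ne hne] with i hi
    exact mul_div_cancel_right₀ _ hi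
  have h1 := key _ _ (ratioTo_floor hx (k := fun i => i) tendsto_id)
  have h2 := E.reg x hx
  rw [tendsto_nhds_unique h2 h1]
  exact key n k hR

theorem Expansion.S_hom (E : Expansion Cm Cinf φ ρ S) {x : ℝ} (hx : 0 < x) {u : Fin d → ℝ}
    (hu : u ∈ posBox d) :
    x ^ ρ * S u = x * Cinf (root u x) ^ (x - 1) * S (root u x) := by
  have hR := ratioTo_floor hx (k := fun i => i) tendsto_id
  have hV := (E.unif_S.tendsto_at (posBox_subset d hu)).comp hR.left
  exact tendsto_nhds_unique ((E.ratio hx hR).mul hV) (E.ratio_mul hx hR hu)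

/-- The limit of the quadratic remainder is a positive multiple of `S² / C_∞`. -/
theorem Expansion.quad (E : Expansion Cm Cinf φ ρ S) {x : ℝ} (hx : 0 < x) {u : Fin d → ℝ}
    (hu : u ∈ posBox d) :
    x / 2 * Cinf (root u x) ^ (x - 2) * S (root u x) ^ 2 =
      (x ^ ρ) ^ 2 / (2 * x) * (S u ^ 2 / Cinf u) := by
  have hc := E.Cinf_pos _ (root_mem hu hx)
  have h := E.S_hom hx hu
  rw [E.maxStable hx hu, div_mul_div_comm, ← mul_pow, h]
  generalize Cinf (root u x) = c at *
  have h1 : c ^ (x - 1) = c ^ x / c := by rw [Real.rpow_sub_one hc.ne']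
  have h2 : c ^ (x - 2) = c ^ x / c ^ 2 := by
    rw [Real.rpow_sub hc]; norm_num
  rw [h1, h2]
  have h3 := (Real.rpow_pos_of_pos hc x).ne'
  field_simp

end

/-! ### Third order: convergence of the ratios of `ψ` -/

/-- If no nontrivial combination of the three coordinates vanishes on `D`, every target vector is
a finite linear combination of values `F u`, `u ∈ D`. -/
theorem exists_comb {ι : Type*} (F : ι → ℝ × ℝ × ℝ)
    (hF : ∀ α β γ : ℝ, (∀ u, α * (F u).1 + β * (F u).2.1 + γ * (F u).2.2 = 0) →
      α = 0 ∧ β = 0 ∧ γ = 0) (z : ℝ × ℝ × ℝ) :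
    ∃ l : ι →₀ ℝ, (∑ p ∈ l.support, l p * (F p).1 = z.1) ∧
      (∑ p ∈ l.support, l p * (F p).2.1 = z.2.1) ∧
      (∑ p ∈ l.support, l p * (F p).2.2 = z.2.2) := by
  have hz : z ∈ Submodule.span ℝ (Set.range F) := by
    by_contra hz
    obtain ⟨f, hfz, hf⟩ := Submodule.exists_le_ker_of_notMem hz
    have hdec : ∀ w : ℝ × ℝ × ℝ,
        f w = f (1, 0, 0) * w.1 + f (0, 1, 0) * w.2.1 + f (0, 0, 1) * w.2.2 := by
      rintro ⟨a, b, c⟩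
      have : ((a, b, c) : ℝ × ℝ × ℝ) =
          a • ((1, 0, 0) : ℝ × ℝ × ℝ) + b • (0, 1, 0) + c • (0, 0, 1) := by
        simp
      rw [this, map_add, map_add, map_smul, map_smul, map_smul]
      simp [mul_comm]
    obtain ⟨h1, h2, h3⟩ := hF _ _ _ fun u => by
      rw [← hdec]
      exact hf (Submodule.subset_span ⟨u, rfl⟩)
    apply hfz
    rw [hdec, h1, h2, h3]; ring
  obtain ⟨l, hl⟩ := Finsupp.mem_span_range_iff_exists_finsupp.1 hz
  refine ⟨l, ?_⟩
  rw [Finsupp.sum] at hl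
  rw [← hl]
  simp [Prod.fst_sum, Prod.snd_sum]

/-- The ratio `ψ n / ψ k` converges along all block sizes with `n / k → x`, to a limit depending
continuously on `x` only. -/
theorem Expansion.exists_limit {d : ℕ} {Cm : ℕ → (Fin d → ℝ) → ℝ} {Cinf : (Fin d → ℝ) → ℝ}
    {φ : ℕ → ℝ} {ρ : ℝ} {S T : (Fin d → ℝ) → ℝ} (E : Expansion Cm Cinf φ ρ S)
    {ψ : ℕ → ℝ} (hψ : ∀ k, 0 < ψ k) (hT : ContinuousOn T (unitBox d))
    (hconv : TendstoUniformlyOn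
      (fun k u => ((Cm k u - Cinf u) / φ k - S u) / ψ k) T atTop (unitBox d))
    (hlin : ∀ α β γ : ℝ,
      (∀ u ∈ posBox d, α * S u + β * T u + γ * (S u ^ 2 / Cinf u) = 0) →
      α = 0 ∧ β = 0 ∧ γ = 0) :
    ∃ G : ℝ → ℝ, ContinuousOn G (Set.Ioi 0) ∧ ∀ x, 0 < x → ∀ n k : ℕ → ℕ, RatioTo n k x →
      Tendsto (fun i => ψ (n i) / ψ (k i)) atTop (nhds (G x)) := by
  let F : posBox d → ℝ × ℝ × ℝ := fun u => (S u, T u, S u ^ 2 / Cinf u)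
  have hF : ∀ α β γ : ℝ, (∀ u, α * (F u).1 + β * (F u).2.1 + γ * (F u).2.2 = 0) →
      α = 0 ∧ β = 0 ∧ γ = 0 := fun α β γ h => hlin α β γ fun u hu => h ⟨u, hu⟩
  -- `l` isolates the coefficient of `T`, `l'` that of `S² / C_∞`; both annihilate `S`.
  obtain ⟨l, l1, l2, l3⟩ := exists_comb F hF (0, 1, 0)
  obtain ⟨l', l1', l2', l3'⟩ := exists_comb F hF (0, 0, 1)
  let W : ℝ → (Fin d → ℝ) → ℝ := fun x u => x * Cinf (root u x) ^ (x - 1) * T (root u x)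
  have hmaps : ∀ u ∈ posBox d, Set.MapsTo (root u) (Set.Ioi 0) (unitBox d) :=
    fun u hu y hy => posBox_subset d (root_mem hu hy)
  refine ⟨fun x => (∑ p ∈ l.support, l p * W x p) / x ^ ρ, ?_, ?_⟩
  · refine ContinuousOn.div ?_ ?_ ?_
    · refine continuousOn_finsetSum _ fun p _ => continuousOn_const.mul ?_
      refine (continuousOn_id.mul (ContinuousOn.rpow ?_ (by fun_prop) ?_)).mul ?_
      · exact E.Cinf_cont.comp (root_continuousOn p.2) (hmaps p p.2)
      · exact fun y hy => Or.inl (E.Cinf_pos _ (root_mem p.2 hy)).ne'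
      · exact hT.comp (root_continuousOn p.2) (hmaps p p.2)
    · exact ContinuousOn.rpow_const continuousOn_id fun y hy => Or.inl (ne_of_gt hy)
    · exact fun y hy => (Real.rpow_pos_of_pos hy ρ).ne'
  intro x hx n k hR
  choose R hRlim hRev using fun p : posBox d => E.expand hx hR p.2
  let Tn : ℕ → posBox d → ℝ := fun i p =>
    ((Cm (n i) p - Cinf p) / φ (n i) - S p) / ψ (n i)
  let Wn : ℕ → posBox d → ℝ := fun i p =>
    (n i / k i : ℝ) * Cinf (root p (n i / k i)) ^ ((n i / k i : ℝ) - 1) *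
      (((Cm (k i) (root p (n i / k i)) - Cinf (root p (n i / k i))) / φ (k i) -
        S (root p (n i / k i))) / ψ (k i))
  have hTn : ∀ p : posBox d, Tendsto (fun i => Tn i p) atTop (nhds (T p)) := fun p =>
    (hconv.tendsto_at (posBox_subset d p.2)).comp hR.left
  have hWn : ∀ p : posBox d, Tendsto (fun i => Wn i p) atTop (nhds (W x p)) := by
    intro p
    have hr := root_mem p.2 hx
    have hv := root_tendsto p.2 hx hR.ratio
    have hCi : Tendsto (fun i => Cinf (root p (n i / k i))) atTop (nhds (Cinf (root p x))) :=
      (E.Cinf_cont _ (posBox_subset d hr)).tendsto.comp hv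
    exact (hR.ratio.mul (hCi.rpow (hR.ratio.sub_const 1)
      (Or.inl (E.Cinf_pos _ hr).ne'))).mul
      (unif_comp hconv hT hR.right (posBox_subset d hr) hv)
  have hrel : ∀ p : posBox d, ∀ᶠ i in atTop,
      (φ (n i) / φ (k i) - (n i / k i : ℝ) ^ ρ) * S p + φ (n i) / φ (k i) * ψ (n i) * Tn i p =
        ψ (k i) * Wn i p + ((n i / k i : ℝ) - 1) * φ (k i) * R p i := by
    intro p
    filter_upwards [hRev p, hR.left.eventually_gt_atTop 0, hR.right.eventually_gt_atTop 0]
      with i hi hn hk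
    have hy : (0:ℝ) < n i / k i := by positivity
    have hS := E.S_hom hy p.2
    have h1 : ψ (n i) * Tn i p = (Cm (n i) p - Cinf p) / φ (n i) - S p :=
      mul_div_cancel₀ _ (hψ _).ne'
    have h2 : ψ (k i) * Wn i p =
        (n i / k i : ℝ) * Cinf (root p (n i / k i)) ^ ((n i / k i : ℝ) - 1) *
        ((Cm (k i) (root p (n i / k i)) - Cinf (root p (n i / k i))) / φ (k i) -
        S (root p (n i / k i))) := by
      rw [mul_left_comm, mul_div_cancel₀ _ (hψ _).ne']
    rw [mul_assoc (φ (n i) / φ (k i)), h1, h2]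
    linear_combination hi - hS
  have hcomb : ∀ q : posBox d →₀ ℝ, (∑ p ∈ q.support, q p * S p = 0) → ∀ᶠ i in atTop,
      φ (n i) / φ (k i) * ψ (n i) * ∑ p ∈ q.support, q p * Tn i p =
        ψ (k i) * ∑ p ∈ q.support, q p * Wn i p +
          ((n i / k i : ℝ) - 1) * φ (k i) * ∑ p ∈ q.support, q p * R p i := by
    intro q hq
    have hall : ∀ᶠ i in atTop, ∀ p ∈ q.support, _ :=
      (Filter.eventually_all_finset q.support).2 fun p _ => hrel p
    filter_upwards [hall] with i hi
    have h1 : ∑ p ∈ q.support, q p * ((φ (n i) / φ (k i) - (n i / k i : ℝ) ^ ρ) * S p +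
          φ (n i) / φ (k i) * ψ (n i) * Tn i p) =
        ∑ p ∈ q.support, q p * (ψ (k i) * Wn i p +
          ((n i / k i : ℝ) - 1) * φ (k i) * R p i) :=
      Finset.sum_congr rfl fun p hp => by rw [hi p hp]
    simp only [mul_add, Finset.sum_add_distrib, mul_left_comm (q _), ← Finset.mul_sum] at h1
    rw [hq] at h1
    linarith
  set r : ℝ := (x ^ ρ) ^ 2 / (2 * x) with hr
  have hxρ : 0 < x ^ ρ := Real.rpow_pos_of_pos hx ρ
  have hr0 : 0 < r := by positivity
  have limT : ∀ q : posBox d →₀ ℝ, Tendsto (fun i => ∑ p ∈ q.support, q p * Tn i p) atTop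
      (nhds (∑ p ∈ q.support, q p * T p)) := fun q =>
    tendsto_finsetSum _ fun p _ => (hTn p).const_mul _
  have limW : ∀ q : posBox d →₀ ℝ, Tendsto (fun i => ∑ p ∈ q.support, q p * Wn i p) atTop
      (nhds (∑ p ∈ q.support, q p * W x p)) := fun q =>
    tendsto_finsetSum _ fun p _ => (hWn p).const_mul _
  have limR : ∀ q : posBox d →₀ ℝ, Tendsto (fun i => ∑ p ∈ q.support, q p * R p i) atTop
      (nhds (r * ∑ p ∈ q.support, q p * (S p ^ 2 / Cinf p))) := by
    intro q
    rw [Finset.mul_sum]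
    refine tendsto_finsetSum _ fun p _ => ?_
    have := (hRlim p).const_mul (q p)
    rw [E.quad hx p.2, mul_left_comm] at this
    exact this
  have A := limT l
  have A₂ := limT l'
  have B := limR l
  have B₂ := limR l'
  rw [show ∑ p ∈ l.support, l p * T p = 1 from l2] at A
  rw [show ∑ p ∈ l'.support, l' p * T p = 0 from l2'] at A₂
  rw [show ∑ p ∈ l.support, l p * (S p ^ 2 / Cinf p) = 0 from l3, mul_zero] at B
  rw [show ∑ p ∈ l'.support, l' p * (S p ^ 2 / Cinf p) = 1 from l3', mul_one] at B₂
  -- Solving the two equations by determinants eliminates the unknown coefficient `(n / k - 1) * φ k`.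
  have hdet := (A.mul B₂).sub (A₂.mul B)
  have hnum := ((limW l).mul B₂).sub ((limW l').mul B)
  have hquot := (hnum.div hdet (by simpa using hr0.ne')).div (E.ratio hx hR) hxρ.ne'
  have hval : (((∑ p ∈ l.support, l p * W x p) * r - (∑ p ∈ l'.support, l' p * W x p) * 0) /
      (1 * r - 0 * 0)) / x ^ ρ = (∑ p ∈ l.support, l p * W x p) / x ^ ρ := by
    rw [mul_zero, sub_zero, one_mul, mul_zero, sub_zero, mul_div_cancel_right₀ _ hr0.ne']
  rw [hval] at hquot
  refine hquot.congr' ?_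
  filter_upwards [hcomb l l1, hcomb l' l1', hdet.eventually_ne (by simpa using hr0.ne')]
    with i h1 h2 h3
  have hφn := (E.φ_pos (n i)).ne'
  have hφk := (E.φ_pos (k i)).ne'
  have hψk := (hψ (k i)).ne'
  have hrat : φ (n i) / φ (k i) ≠ 0 := div_ne_zero hφn hφk
  simp only [Pi.div_apply]
  rw [div_div, div_eq_div_iff (mul_ne_zero h3 hrat) hψk]
  linear_combination (-(∑ p ∈ l'.support, l' p * R p i)) * h1 +
    (∑ p ∈ l.support, l p * R p i) * h2

/-! ### From ratio limits to regular variation -/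

/-- A positive null sequence whose ratios converge continuously in this sense is regularly varying:
the limit function is continuous and multiplicative, hence a power. -/
theorem regVar_of_limit {ψ : ℕ → ℝ} (hψ : ∀ k, 0 < ψ k) (hψ0 : Tendsto ψ atTop (nhds 0))
    {G : ℝ → ℝ} (hG : ContinuousOn G (Set.Ioi 0))
    (h : ∀ x, 0 < x → ∀ n k : ℕ → ℕ, RatioTo n k x →
      Tendsto (fun i => ψ (n i) / ψ (k i)) atTop (nhds (G x))) :
    ∃ ρψ : ℝ, ρψ ≤ 0 ∧ RegVar ψ ρψ := by
  have hfl : ∀ x, 0 < x → RatioTo (fun i => ⌊x * (i : ℝ)⌋₊) (fun i => i) x := fun x hx =>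
    ratioTo_floor hx (k := fun i => i) tendsto_id
  have hmul : ∀ x y, 0 < x → 0 < y → G (x * y) = G x * G y := by
    intro x y hx hy
    have h2 := hfl y hy
    have h1 := ratioTo_floor hx h2.left
    have h3 := (h x hx _ _ h1).mul (h y hy _ _ h2)
    refine tendsto_nhds_unique (h _ (mul_pos hx hy) _ _ (h1.trans h2)) (h3.congr fun i => ?_)
    exact div_mul_div_cancel₀ (hψ _).ne'
  have hone : G 1 = 1 := by
    have h1 : RatioTo (fun i => i) (fun i => i) 1 :=
      ⟨tendsto_id, tendsto_id, tendsto_const_nhds.congr' (by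
        filter_upwards [eventually_gt_atTop 0] with i hi
        rw [div_self]; positivity)⟩
    refine tendsto_nhds_unique (h 1 one_pos _ _ h1) (tendsto_const_nhds.congr fun i => ?_)
    rw [div_self (hψ i).ne']
  have hnn : ∀ x, 0 < x → 0 ≤ G x := fun x hx =>
    ge_of_tendsto' (h x hx _ _ (hfl x hx)) fun i => (div_pos (hψ _) (hψ _)).le
  have hpos : ∀ x, 0 < x → 0 < G x := by
    intro x hx
    refine (hnn x hx).lt_of_ne' fun h0 => ?_
    have := hmul x x⁻¹ hx (inv_pos.2 hx)
    rw [mul_inv_cancel₀ hx.ne', hone, h0, zero_mul] at this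
    exact one_ne_zero this
  let f : ℝ →+ ℝ :=
    { toFun := fun t => Real.log (G (Real.exp t))
      map_zero' := by simp [hone]
      map_add' := fun s t => by
        rw [Real.exp_add, hmul _ _ (Real.exp_pos s) (Real.exp_pos t),
          Real.log_mul (hpos _ (Real.exp_pos s)).ne' (hpos _ (Real.exp_pos t)).ne'] }
  have hf : Continuous f := by
    refine Continuous.log ?_ fun t => (hpos _ (Real.exp_pos t)).ne'
    exact hG.comp_continuous Real.continuous_exp fun t => Real.exp_pos t
  have hGpow : ∀ x, 0 < x → G x = x ^ f 1 := by
    intro x hx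
    have h1 := map_real_smul f hf (Real.log x) 1
    rw [smul_eq_mul, mul_one, smul_eq_mul] at h1
    have h2 : f (Real.log x) = Real.log (G x) := by
      change Real.log (G (Real.exp (Real.log x))) = _
      rw [Real.exp_log hx]
    rw [Real.rpow_def_of_pos hx, ← h1, h2, Real.exp_log (hpos x hx)]
  refine ⟨f 1, ?_, fun x hx => ?_⟩
  · -- A positive index would make `ψ` increase along doubling, against `ψ → 0`.
    by_contra! hlt
    have h1 : 1 < G 2 := by
      rw [hGpow 2 two_pos]; exact Real.one_lt_rpow (by norm_num) hlt
    obtain ⟨N, hN⟩ := eventually_atTop.1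
      ((h 2 two_pos _ _ (hfl 2 two_pos)).eventually_const_lt h1)
    have hdouble : ∀ k, N ≤ k → ψ k < ψ (2 * k) := by
      intro k hk
      have h2 := hN k hk
      rw [one_lt_div (hψ k)] at h2
      have h3 : ⌊(2:ℝ) * (k : ℝ)⌋₊ = 2 * k := by
        rw [← Nat.floor_natCast (R := ℝ) (2 * k)]; push_cast; rfl
      rwa [h3] at h2
    have hiter : ∀ j : ℕ, ψ (N + 1) ≤ ψ (2 ^ j * (N + 1)) := by
      intro j
      induction j with
      | zero => simp
      | succ j ih =>
        have h4 : N ≤ 2 ^ j * (N + 1) := by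
          have := Nat.le_mul_of_pos_left (N + 1) (Nat.two_pow_pos j)
          omega
        have := hdouble _ h4
        rw [pow_succ', mul_assoc]
        exact ih.trans this.le
    have hsub : Tendsto (fun j : ℕ => 2 ^ j * (N + 1)) atTop atTop :=
      (tendsto_pow_atTop_atTop_of_one_lt one_lt_two).atTop_mul_const' (Nat.succ_pos N)
    have := ge_of_tendsto' (hψ0.comp hsub) hiter
    exact absurd (hψ (N + 1)) (not_lt.2 this)
  · rw [← hGpow x hx]
    exact h x hx _ _ (hfl x hx)

/-- in the i.i.d. case, the auxiliary function `ψ` in the third order expansion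
is necessarily regularly varying of some order `ρ_ψ ≤ 0`. -/
theorem statement2 {d : ℕ} (C : (Fin d → ℝ) → ℝ) (hC : IsCopula C)
    (Cm : ℕ → (Fin d → ℝ) → ℝ)
    (hCm : ∀ m : ℕ, ∀ u ∈ unitBox d, Cm m u = (C fun j => u j ^ ((m:ℝ)⁻¹)) ^ (m:ℝ))
    (Cinf : (Fin d → ℝ) → ℝ) (φ : ℕ → ℝ) (ρφ : ℝ) (S : (Fin d → ℝ) → ℝ)
    (h2 : SecondOrderCond Cm Cinf φ ρφ S)
    (hCinfpos : ∀ u : Fin d → ℝ, (∀ j, u j ∈ Set.Ioc (0:ℝ) 1) → 0 < Cinf u)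
    (ψ : ℕ → ℝ) (hψpos : ∀ k, 0 < ψ k) (hψ0 : Tendsto ψ atTop (nhds 0))
    (T : (Fin d → ℝ) → ℝ) (hTne : ∃ u ∈ unitBox d, T u ≠ 0)
    (hconv : TendstoUniformlyOn
      (fun k u => ((Cm k u - Cinf u) / φ k - S u) / ψ k) T atTop (unitBox d))
    (hlin : ∀ α β γ : ℝ,
      (∀ u : Fin d → ℝ, (∀ j, u j ∈ Set.Ioc (0:ℝ) 1) →
        α * S u + β * T u + γ * (S u ^ 2 / Cinf u) = 0) →
      α = 0 ∧ β = 0 ∧ γ = 0) :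
    ∃ ρψ : ℝ, ρψ ≤ 0 ∧ RegVar ψ ρψ := by
  obtain ⟨hφpos, hρ, hreg, hS, -, hunifS⟩ := h2
  have hφ0 := hreg.tendsto_zero hφpos hρ
  have hunifC := unif_of_scaled hφpos hφ0 hS hunifS
  have hCmc := Cm_continuousOn hC hCm
  have hCinfc : ContinuousOn Cinf (unitBox d) :=
    hunifC.continuousOn (Eventually.of_forall hCmc).frequently
  have hT : ContinuousOn T (unitBox d) :=
    hconv.continuousOn (Eventually.of_forall fun k =>
      ((((hCmc k).sub hCinfc).div_const _).sub hS).div_const _).frequently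
  have hSne : ∃ u ∈ posBox d, S u ≠ 0 := by
    by_contra! h0
    have := (hlin 1 0 0 fun u hu => by rw [h0 u hu]; ring).1
    exact one_ne_zero this
  have E : Expansion Cm Cinf φ ρφ S :=
    { stab := fun n k hn hk u hu => Cm_stable hC hCm hn hk hu
      φ_pos := hφpos
      φ_zero := hφ0
      reg := hreg
      Cinf_pos := hCinfpos
      Cinf_cont := hCinfc
      S_cont := hS
      unif_C := hunifC
      unif_S := hunifS
      S_ne := hSne }
  obtain ⟨G, hG, hlim⟩ := E.exists_limit hψpos hT hconv hlin
  exact regVar_of_limit hψpos hψ0 hG hlim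
end
end

section
/- Let U be a nonempty set, (Θ, d) a metric space, and ℒ : Θ → ℝ a bounded function with a unique maximizer θ_0 (i.e. ℒ(θ) < ℒ(θ_0) for all θ ≠ θ_0). On a probability space (Ω, 𝒜, P), for each n ∈ ℕ let ℒ̌_n : Ω × Θ × U → ℝ be bounded and let θ̌_n : Ω × U → Θ satisfy ℒ̌_n(ω, θ̌_n(ω,u), u) = sup_{θ∈Θ} ℒ̌_n(ω, θ, u) for all ω ∈ Ω, u ∈ U. Assume the maps ω ↦ sup_{u∈U, θ∈Θ} |ℒ̌_n(ω, θ, u) − ℒ(θ)|, ω ↦ sup_{u∈U} (ℒ(θ_0) − ℒ̌_n(ω, θ̌_n(ω,u), u)) and ω ↦ sup_{u∈U} d(θ̌_n(ω,u), θ_0) are measurable. If sup_{u∈U, θ∈Θ} |ℒ̌_n(·, θ, u) − ℒ(θ)| → 0 in probability, then for every ε > 0, P( sup_{u∈U} [ℒ(θ_0) − ℒ̌_n(·, θ̌_n(·,u), u)] > ε ) → 0. If moreover for every ε > 0 one has sup_{θ : d(θ, θ_0) ≥ ε} ℒ(θ) < ℒ(θ_0), then sup_{u∈U} d(θ̌_n(·,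 u), θ_0) → 0 in probability. -/
/-!
The argument is deterministic. For fixed `n` and `ω` let `D` be the uniform distance between the
criterion `Ln n ω` and `L`. Since `θn n ω u` maximizes the criterion,
`L θ0 - D ≤ Ln n ω θ0 u ≤ Ln n ω (θn n ω u) u ≤ L (θn n ω u) + D`.
The first two inequalities bound the criterion gap by `D`. If some `θn n ω u` is at distance at
least `ε` from `θ0`, well-separation gives `L (θn n ω u) ≤ c < L θ0`, whence `L θ0 - c ≤ 2 * D`.
Both events are therefore contained in events `{δ < D}` with `δ > 0`, whose probability tends to
`0`.
-/

open MeasureTheory Filter Set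

noncomputable section

/-- Events contained in events of vanishing probability have vanishing probability; none of them
need be measurable. -/
lemma tendsto_prob_of_subset {Ω : Type*} [MeasurableSpace Ω] (P : Measure Ω)
    [IsProbabilityMeasure P] {A B : ℕ → Set Ω} (hAB : ∀ n, A n ⊆ B n)
    (hB : Tendsto (fun n => (P (B n)).toReal) atTop (nhds 0)) :
    Tendsto (fun n => (P (A n)).toReal) atTop (nhds 0) :=
  squeeze_zero (fun _ => ENNReal.toReal_nonneg)
    (fun n => ENNReal.toReal_mono (measure_ne_top P _) (measure_mono (hAB n))) hB

/-- argmax consistency for uniformly (over a nuisance index set `U`)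
consistent criterion functions. -/
theorem statement6 {U : Type*} [Nonempty U] {Θ : Type*} [MetricSpace Θ]
    {Ω : Type*} [MeasurableSpace Ω] (P : Measure Ω) [IsProbabilityMeasure P]
    (L : Θ → ℝ) (hLb : ∃ B, ∀ θ, |L θ| ≤ B)
    (θ0 : Θ) (hunique : ∀ θ, θ ≠ θ0 → L θ < L θ0)
    (Ln : ℕ → Ω → Θ → U → ℝ)
    (hLnb : ∀ n, ∃ B, ∀ ω θ u, |Ln n ω θ u| ≤ B)
    (θn : ℕ → Ω → U → Θ)
    (hargmax : ∀ n ω u, Ln n ω (θn n ω u) u = ⨆ θ, Ln n ω θ u)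
    (hmeasD : ∀ n, Measurable fun ω => ⨆ p : U × Θ, |Ln n ω p.2 p.1 - L p.2|)
    (hmeasE : ∀ n, Measurable fun ω => ⨆ u, (L θ0 - Ln n ω (θn n ω u) u))
    (hmeasF : ∀ n, Measurable fun ω => ⨆ u, dist (θn n ω u) θ0)
    (hconv : ∀ ε : ℝ, 0 < ε →
      Tendsto (fun n => (P {ω | ε < ⨆ p : U × Θ, |Ln n ω p.2 p.1 - L p.2|}).toReal)
        atTop (nhds 0)) :
    (∀ ε : ℝ, 0 < ε →
      Tendsto (fun n => (P {ω | ε < ⨆ u, (L θ0 - Ln n ω (θn n ω u) u)}).toReal)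
        atTop (nhds 0)) ∧
    ((∀ ε : ℝ, 0 < ε → ∃ c, c < L θ0 ∧ ∀ θ, ε ≤ dist θ θ0 → L θ ≤ c) →
      ∀ ε : ℝ, 0 < ε →
        Tendsto (fun n => (P {ω | ε < ⨆ u, dist (θn n ω u) θ0}).toReal)
          atTop (nhds 0)) := by
  obtain ⟨B, hB⟩ := hLb
  have hD : ∀ n ω θ u, |Ln n ω θ u - L θ| ≤ ⨆ p : U × Θ, |Ln n ω p.2 p.1 - L p.2| := by
    intro n ω θ u
    obtain ⟨C, hC⟩ := hLnb n
    -- A real supremum dominates its terms only for bounded families.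
    have hbdd : BddAbove (range fun p : U × Θ => |Ln n ω p.2 p.1 - L p.2|) := by
      refine ⟨C + B, ?_⟩
      rintro _ ⟨p, rfl⟩
      exact (abs_sub _ _).trans (add_le_add (hC _ _ _) (hB _))
    exact le_ciSup hbdd (u, θ)
  have hmax : ∀ n ω u, Ln n ω θ0 u ≤ Ln n ω (θn n ω u) u := by
    intro n ω u
    obtain ⟨C, hC⟩ := hLnb n
    rw [hargmax]
    have hbdd : BddAbove (range fun θ => Ln n ω θ u) := by
      refine ⟨C, ?_⟩
      rintro _ ⟨θ, rfl⟩
      exact (le_abs_self _).trans (hC _ _ _)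
    exact le_ciSup hbdd θ0
  refine ⟨fun ε hε => ?_, fun hsep ε hε => ?_⟩
  · refine tendsto_prob_of_subset P (fun n ω hω => ?_) (hconv ε hε)
    refine lt_of_lt_of_le (mem_ofPred_eq ▸ hω : ε < _) (ciSup_le fun u => ?_)
    have h1 := (abs_le.mp (hD n ω θ0 u)).1
    have h2 := hmax n ω u
    linarith
  · obtain ⟨c, hc, hcL⟩ := hsep ε hε
    -- Dividing by `3` rather than `2` turns `L θ0 - c ≤ 2 * D` into a strict lower bound for `D`.
    refine tendsto_prob_of_subset P (fun n ω hω => ?_) (hconv ((L θ0 - c) / 3) (by linarith))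
    -- An unbounded family of distances has real supremum `0`, so it cannot exceed `ε > 0`;
    -- `Real.iSup_le` needs no boundedness.
    obtain ⟨u, hu⟩ : ∃ u, ε < dist (θn n ω u) θ0 := by
      by_contra! h
      exact absurd (Real.iSup_le h hε.le) (not_le.mpr hω)
    have h1 := (abs_le.mp (hD n ω θ0 u)).1
    have h2 := hmax n ω u
    have h3 := (abs_le.mp (hD n ω (θn n ω u) u)).2
    have h4 := hcL _ hu.le
    change (L θ0 - c) / 3 < _
    linarith
end
end

section
/- Fix a > 0 with a ≠ 1 and ρ < 0, and define g : (−∞, 0) → ℝ by g(γ) := |a^γ − a^ρ| / |a^γ − 1|. Then g is strictly decreasing on (−∞, ρ) and strictly increasing on (ρ, 0); moreover lim_{γ → −∞} g(γ) = a^ρ if a > 1 and lim_{γ → −∞} g(γ) = 1 if a < 1, and lim_{γ ↑ 0} g(γ) = +∞. -/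
open Filter Set

noncomputable section

/-!
Put `F(γ) = (a^γ - a^ρ) / (a^γ - 1)`, so that `g = |F|`. For `x < y < 0`,
`F(x) - F(y) = (1 - a^ρ) (a^y - a^x) / ((a^x - 1) (a^y - 1))`, and each of the two products is
positive because its factors have the same sign (the sign of `log a` in the numerator, its opposite
in the denominator). Hence `F` is strictly decreasing on `(-∞, 0)`, and it vanishes at `ρ`; so
`|F|` is `F` to the left of `ρ` and `-F` to the right of it, which gives both monotonicity claims.

As `γ → -∞`, `a^γ` tends to `0` if `a > 1` and to `+∞` if `a < 1`; in the second case write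
`F = 1 + (1 - a^ρ) / (a^γ - 1)`. As `γ ↑ 0`, the numerator of `g` tends to `|1 - a^ρ| > 0` and its
denominator to `0` from above.
-/

/-- Increments of `γ ↦ a^γ` all have the same sign, that of `log a`. -/
lemma rpow_sub_mul_rpow_sub_pos {a : ℝ} (ha : 0 < a) (hane : a ≠ 1) {x y u v : ℝ}
    (hxy : x < y) (huv : u < v) : 0 < (a ^ y - a ^ x) * (a ^ v - a ^ u) := by
  rcases lt_or_gt_of_ne hane with h | h
  · exact mul_pos_of_neg_of_neg
      (sub_neg.2 (Real.rpow_lt_rpow_of_exponent_gt ha h hxy))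
      (sub_neg.2 (Real.rpow_lt_rpow_of_exponent_gt ha h huv))
  · exact mul_pos (sub_pos.2 (Real.rpow_lt_rpow_of_exponent_lt h hxy))
      (sub_pos.2 (Real.rpow_lt_rpow_of_exponent_lt h huv))

lemma rpow_sub_one_ne_zero {a : ℝ} (ha : 0 < a) (hane : a ≠ 1) {x : ℝ} (hx : x < 0) :
    a ^ x - 1 ≠ 0 := by
  have h := rpow_sub_mul_rpow_sub_pos ha hane hx hx
  rw [Real.rpow_zero] at h
  intro h0
  nlinarith

/-- The signed quotient `F` is strictly decreasing on the whole of `(-∞, 0)`. -/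
lemma strictAntiOn_signed_quotient {a : ℝ} (ha : 0 < a) (hane : a ≠ 1) {ρ : ℝ} (hρ : ρ < 0) :
    StrictAntiOn (fun γ : ℝ => (a ^ γ - a ^ ρ) / (a ^ γ - 1)) (Set.Iio 0) := by
  intro x hx y hy hxy
  have hx0 := rpow_sub_one_ne_zero ha hane hx
  have hy0 := rpow_sub_one_ne_zero ha hane hy
  have hnum := rpow_sub_mul_rpow_sub_pos ha hane hρ hxy
  have hden := rpow_sub_mul_rpow_sub_pos ha hane hx hy
  rw [Real.rpow_zero] at hnum hden
  have key : (a ^ x - a ^ ρ) / (a ^ x - 1) - (a ^ y - a ^ ρ) / (a ^ y - 1)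
      = ((1 - a ^ ρ) * (a ^ y - a ^ x)) / ((1 - a ^ x) * (1 - a ^ y)) := by
    rw [div_sub_div _ _ hx0 hy0]
    congr 1 <;> ring
  exact sub_pos.1 (key ▸ div_pos hnum hden)

/-- monotonicity and limit behaviour of
`g(γ) = |a^γ − a^ρ| / |a^γ − 1|` on `(−∞, 0)`. -/
theorem statement9 (a : ℝ) (ha : 0 < a) (hane : a ≠ 1) (ρ : ℝ) (hρ : ρ < 0) :
    StrictAntiOn (fun γ : ℝ => |a ^ γ - a ^ ρ| / |a ^ γ - 1|) (Set.Iio ρ) ∧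
    StrictMonoOn (fun γ : ℝ => |a ^ γ - a ^ ρ| / |a ^ γ - 1|) (Set.Ioo ρ 0) ∧
    (1 < a →
      Tendsto (fun γ : ℝ => |a ^ γ - a ^ ρ| / |a ^ γ - 1|) atBot (nhds (a ^ ρ))) ∧
    (a < 1 →
      Tendsto (fun γ : ℝ => |a ^ γ - a ^ ρ| / |a ^ γ - 1|) atBot (nhds 1)) ∧
    Tendsto (fun γ : ℝ => |a ^ γ - a ^ ρ| / |a ^ γ - 1|)
      (nhdsWithin 0 (Set.Iio 0)) atTop := by
  have hF := strictAntiOn_signed_quotient ha hane hρ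
  have hFρ : (a ^ ρ - a ^ ρ) / (a ^ ρ - 1) = 0 := by simp
  refine ⟨?_, ?_, ?_, ?_, ?_⟩
  · intro x hx y hy hxy
    have hx : x < ρ := hx
    have hy : y < ρ := hy
    have h1 := hF (hx.trans hρ) (hy.trans hρ) hxy
    have h2 := hF (hy.trans hρ) hρ hy
    simp only [hFρ] at h1 h2
    simp only [← abs_div]
    rwa [abs_of_pos h2, abs_of_pos (h2.trans h1)]
  · rintro x ⟨hx, hx0⟩ y ⟨hy, hy0⟩ hxy
    have h1 := hF hx0 hy0 hxy
    have h2 := hF hρ hx0 hx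
    simp only [hFρ] at h1 h2
    simp only [← abs_div]
    rw [abs_of_neg h2, abs_of_neg (h1.trans h2)]
    exact neg_lt_neg h1
  · intro h
    have ht : Tendsto (fun γ : ℝ => a ^ γ) atBot (nhds 0) :=
      tendsto_rpow_atBot_of_base_gt_one a h
    have := ((ht.sub_const (a ^ ρ)).abs).div ((ht.sub_const 1).abs) (by norm_num)
    simpa [Pi.div_def, abs_of_pos (Real.rpow_pos_of_pos ha ρ)] using this
  · intro h
    have ht : Tendsto (fun γ : ℝ => a ^ γ) atBot atTop :=
      tendsto_rpow_atBot_of_base_lt_one a ha h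
    have hs : Tendsto (fun γ : ℝ => a ^ γ - 1) atBot atTop :=
      tendsto_atTop_add_const_right _ (-1) ht
    have hlim := ((hs.const_div_atTop (1 - a ^ ρ)).const_add 1).abs
    rw [add_zero, abs_one] at hlim
    refine hlim.congr' ?_
    filter_upwards [eventually_lt_atBot (0 : ℝ)] with γ hγ
    have hγ0 := rpow_sub_one_ne_zero ha hane hγ
    rw [← abs_div]
    congr 1
    field_simp
    ring
  · have ht : Tendsto (fun γ : ℝ => a ^ γ) (nhdsWithin 0 (Set.Iio 0)) (nhds 1) := by
      have := (Real.continuous_const_rpow ha.ne').tendsto 0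
      rw [Real.rpow_zero] at this
      exact this.mono_left nhdsWithin_le_nhds
    have hnum := (ht.sub_const (a ^ ρ)).abs
    have hpos : 0 < |1 - a ^ ρ| := by
      rw [abs_sub_comm]
      exact abs_pos.2 (rpow_sub_one_ne_zero ha hane hρ)
    have hden : Tendsto (fun γ : ℝ => |a ^ γ - 1|) (nhdsWithin 0 (Set.Iio 0))
        (nhdsWithin 0 (Set.Ioi 0)) := by
      refine tendsto_nhdsWithin_iff.2 ⟨by simpa using (ht.sub_const 1).abs, ?_⟩
      filter_upwards [self_mem_nhdsWithin] with γ hγ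
      exact abs_pos.2 (rpow_sub_one_ne_zero ha hane hγ)
    simpa only [div_eq_mul_inv, Pi.inv_apply] using hnum.pos_mul_atTop hpos hden.inv_tendsto_nhdsGT_zero
end
end

section
/- Let (C_m)_{m∈ℕ} be a sequence of d-dimensional copulas and C_∞ a function on [0,1]^d for which the second order condition holds with auxiliary function φ (regularly varying of index ρ_φ < 0) and limit function S. Let u ∈ [0,1]^d with S(u) ≠ 0 and let a > 0, a ≠ 1. Then the denominator C_{⌊ma⌋}(u) − C_m(u) is nonzero for all sufficiently large m, and lim_{m→∞} (C_{⌊m a²⌋}(u) − C_m(u)) / (C_{⌊ma⌋}(u) − C_m(u)) = a^{ρ_φ} + 1. -/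
/-! Writing `C m u = C∞ u + φ m (S u + o(1))` for fixed `u`, the unknown limit `C∞ u` cancels in
differences, and regular variation of `φ` gives
`(C ⌊m b⌋ u - C m u) / φ m → (b ^ ρ - 1) S u` for every `b > 0`
(`tendsto_diff_div`). Dividing the cases `b = a ^ 2` and `b = a`, the factors `φ m` and `S u`
cancel and the limit is `(a ^ (2ρ) - 1) / (a ^ ρ - 1) = a ^ ρ + 1`. The denominator is eventually
nonzero because `S u ≠ 0` and, as `ρ < 0` and `a ≠ 1`, also `a ^ ρ ≠ 1`. -/

open MeasureTheory Filter Set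

noncomputable section

/-- Increments of a sequence with second order expansion `c m = c∞ + φ m (s + o(1))`, where `φ`
is regularly varying with index `ρ`: after division by `φ m`, the increment from `m` to `⌊m b⌋`
converges, and the unknown limit `c∞` drops out. -/
lemma tendsto_diff_div {c φ : ℕ → ℝ} {cinf ρ s : ℝ} (hφ : ∀ m, 0 < φ m) (hrv : RegVar φ ρ)
    (hc : Tendsto (fun m => (c m - cinf) / φ m) atTop (nhds s)) {b : ℝ} (hb : 0 < b) :
    Tendsto (fun m : ℕ => (c ⌊(m:ℝ) * b⌋₊ - c m) / φ m) atTop (nhds ((b ^ ρ - 1) * s)) := by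
  have hfl : Tendsto (fun m : ℕ => ⌊(m:ℝ) * b⌋₊) atTop atTop :=
    tendsto_nat_floor_atTop.comp (tendsto_natCast_atTop_atTop.atTop_mul_const hb)
  have h := ((hc.comp hfl).mul (hrv b hb)).sub hc
  have e : (b ^ ρ - 1) * s = s * b ^ ρ - s := by ring
  rw [e]
  refine h.congr fun m => ?_
  have h1 := (hφ m).ne'
  have h2 := (hφ ⌊(m:ℝ) * b⌋₊).ne'
  simp only [Function.comp, mul_comm b (m:ℝ)]
  field_simp
  ring

/-- consistency of the ratio statistic for the second order parameter. -/
theorem statement10 {d : ℕ} (C : ℕ → (Fin d → ℝ) → ℝ) (hcop : ∀ m, IsCopula (C m))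
    (Cinf : (Fin d → ℝ) → ℝ) (φ : ℕ → ℝ) (ρφ : ℝ) (S : (Fin d → ℝ) → ℝ)
    (h2 : SecondOrderCond C Cinf φ ρφ S)
    (u : Fin d → ℝ) (hu : u ∈ unitBox d) (hSu : S u ≠ 0)
    (a : ℝ) (ha : 0 < a) (hane : a ≠ 1) :
    (∃ M : ℕ, ∀ m ≥ M, C ⌊(m:ℝ) * a⌋₊ u - C m u ≠ 0) ∧
    Tendsto (fun m : ℕ =>
        (C ⌊(m:ℝ) * a ^ 2⌋₊ u - C m u) / (C ⌊(m:ℝ) * a⌋₊ u - C m u))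
      atTop (nhds (a ^ ρφ + 1)) := by
  obtain ⟨hφ, hρ, hrv, -, -, hunif⟩ := h2
  have hc := hunif.tendsto_at hu
  have ha1 := tendsto_diff_div hφ hrv hc ha
  have ha2 := tendsto_diff_div hφ hrv hc (pow_pos ha 2)
  have hne : a ^ ρφ - 1 ≠ 0 := by
    intro h
    have h' : Real.log (a ^ ρφ) = 0 := by rw [sub_eq_zero.1 h, Real.log_one]
    rw [Real.log_rpow ha] at h'
    exact (mul_ne_zero hρ.ne (Real.log_ne_zero_of_pos_of_ne_one ha hane)) h'
  have hlim : (a ^ ρφ - 1) * S u ≠ 0 := mul_ne_zero hne hSu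
  constructor
  · obtain ⟨M, hM⟩ := eventually_atTop.1 (ha1.eventually_ne hlim)
    exact ⟨M, fun m hm h0 => hM m hm (by rw [h0, zero_div])⟩
  · have hsq : (a ^ 2) ^ ρφ = (a ^ ρφ) ^ 2 := by
      rw [← Real.rpow_natCast_mul ha.le, ← Real.rpow_mul_natCast ha.le, mul_comm]
    have e : a ^ ρφ + 1 = ((a ^ 2) ^ ρφ - 1) * S u / ((a ^ ρφ - 1) * S u) := by
      rw [hsq]
      field_simp
      ring
    rw [e]
    exact (ha2.div ha1 hlim).congr fun m => div_div_div_cancel_right₀ (hφ m).ne' _ _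
end
end

section
/- Let (C_k)_{k∈ℕ} be a sequence of d-dimensional copulas and C_∞ a function on [0,1]^d for which the third order condition holds with auxiliary functions φ (regularly varying of index ρ_φ < 0), ψ (regularly varying of index ρ_ψ < 0) and limit functions S, T. Fix a > 0 with a ≠ 1, and for m ∈ ℕ define the approximation bias of the naive bias-corrected estimator B_m(u) := C_m(u) − (C_{⌊ma⌋}(u) − C_m(u)) / ((⌊ma⌋/m)^{ρ_φ} − 1) − C_∞(u). Then, as m → ∞, sup_{u∈[0,1]^d} | B_m(u) − φ(m) r_a(m) S(u)/(a^{ρ_φ} − 1) − φ(m) ψ(m) (1 − a^{ρ_ψ}) T(u)/(1 − a^{−ρ_φ}) | = φ(m) · o( ψ(m) + |r_a(m)| ); in particular sup_{u∈[0,1]^d} |B_m(u)| = φ(m) · O( ψ(m) + |r_a(m)| ). -/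
/-!
Write `n = ⌊m a⌋`, `p = (n/m) ^ ρφ`, `f = φ n / φ m`, `g = ψ n / ψ m`, and
`C k - C_∞ = φ k S + φ k ψ k (T + e k)` with `e k → 0` uniformly on the cube. Since
`B m = (p (C m - C_∞) - (C n - C_∞)) / (p - 1)` and `p = r_a(m) + f`, one gets the exact identity
`B m = φ m (r_a(m) S / (p - 1) + ψ m (p (T + e m) - f g (T + e n)) / (p - 1))`.
Now `p, f → a ^ ρφ ≠ 1` and `g → a ^ ρψ`, the limit functions `S` and `T` are bounded on the
compact cube, and `a ^ ρφ (1 - a ^ ρψ) / (a ^ ρφ - 1) = (1 - a ^ ρψ) / (1 - a ^ (-ρφ))`.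
`bias_identity` is the exact identity with the leading terms subtracted, and
`third_order_remainder` supplies the uniform control of `e`.
-/


open MeasureTheory Filter Set

noncomputable section

/-- The third order condition: on top of the second order condition,
`sup_u |C_k(u) − C_∞(u) − φ(k) S(u) − φ(k) ψ(k) T(u)| = o(φ(k) ψ(k))` with `ψ`
regularly varying of negative index and `T` continuous, not identically zero and
not a multiple of `S`. -/
def ThirdOrderCond {d : ℕ} (C : ℕ → (Fin d → ℝ) → ℝ) (Cinf : (Fin d → ℝ) → ℝ)
    (φ : ℕ → ℝ) (ρφ : ℝ) (S : (Fin d → ℝ) → ℝ)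
    (ψ : ℕ → ℝ) (ρψ : ℝ) (T : (Fin d → ℝ) → ℝ) : Prop :=
  SecondOrderCond C Cinf φ ρφ S ∧
  (∀ k, 0 < ψ k) ∧ ρψ < 0 ∧ RegVar ψ ρψ ∧
  ContinuousOn T (unitBox d) ∧ (∃ u ∈ unitBox d, T u ≠ 0) ∧
  (∀ c : ℝ, ∃ u ∈ unitBox d, T u ≠ c * S u) ∧
  TendstoUniformlyOn (fun k u => (C k u - Cinf u - φ k * S u) / (φ k * ψ k)) T atTop (unitBox d)

/-- `r_a(m) := (⌊ma⌋/m)^{ρ_φ} − φ(⌊ma⌋)/φ(m)`. -/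
def raf (φ : ℕ → ℝ) (ρφ : ℝ) (a : ℝ) (m : ℕ) : ℝ :=
  ((⌊(m:ℝ) * a⌋₊ : ℝ) / m) ^ ρφ - φ ⌊(m:ℝ) * a⌋₊ / φ m

lemma bounded_on_unitBox {d : ℕ} {S : (Fin d → ℝ) → ℝ} (hS : ContinuousOn S (unitBox d)) :
    ∃ K : ℝ, 0 ≤ K ∧ ∀ u ∈ unitBox d, |S u| ≤ K := by
  have hc : IsCompact (unitBox d) := by
    have h : unitBox d = Set.pi Set.univ (fun _ : Fin d => Set.Icc (0:ℝ) 1) := by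
      ext u; simp only [unitBox, Set.mem_ofPred_eq, Set.mem_pi, Set.mem_univ, true_imp_iff]
    rw [h]
    exact isCompact_univ_pi fun _ => isCompact_Icc
  obtain ⟨K, hK⟩ := hc.exists_bound_of_continuousOn hS
  exact ⟨max K 0, le_max_right _ _, fun u hu => (hK u hu).trans (le_max_left _ _)⟩

lemma floor_mul_tendsto {a : ℝ} (ha : 0 < a) :
    Tendsto (fun m : ℕ => ⌊(m:ℝ) * a⌋₊) atTop atTop :=
  tendsto_nat_floor_atTop.comp (tendsto_natCast_atTop_atTop.atTop_mul_const ha)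

lemma floor_ratio_rpow_tendsto {a : ℝ} (ha : 0 < a) (ρ : ℝ) :
    Tendsto (fun m : ℕ => ((⌊(m:ℝ) * a⌋₊ : ℝ) / m) ^ ρ) atTop (nhds (a ^ ρ)) := by
  have h : Tendsto (fun m : ℕ => (⌊(m:ℝ) * a⌋₊ : ℝ) / m) atTop (nhds a) := by
    have := (tendsto_nat_floor_mul_div_atTop ha.le).comp (tendsto_natCast_atTop_atTop (R := ℝ))
    simpa [Function.comp_def, mul_comm] using this
  exact h.rpow_const (Or.inl ha.ne')

lemma RegVar.tendsto_floor {φ : ℕ → ℝ} {ρ a : ℝ} (h : RegVar φ ρ) (ha : 0 < a) :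
    Tendsto (fun m : ℕ => φ ⌊(m:ℝ) * a⌋₊ / φ m) atTop (nhds (a ^ ρ)) := by
  simpa [mul_comm] using h a ha

lemma rpow_ne_one_of_ne {a ρ : ℝ} (ha : 0 < a) (hane : a ≠ 1) (hρ : ρ ≠ 0) : a ^ ρ ≠ 1 := by
  intro h
  rw [← Real.one_rpow ρ, Real.rpow_left_inj ha.le zero_le_one hρ] at h
  exact hane h

/-- The third order expansion as an exact identity with a pointwise remainder `e`, uniformly small
for large indices. -/
lemma third_order_remainder {d : ℕ} {C : ℕ → (Fin d → ℝ) → ℝ} {Cinf : (Fin d → ℝ) → ℝ}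
    {φ ψ : ℕ → ℝ} {ρφ ρψ : ℝ} {S T : (Fin d → ℝ) → ℝ}
    (h3 : ThirdOrderCond C Cinf φ ρφ S ψ ρψ T) {δ : ℝ} (hδ : 0 < δ) :
    ∀ᶠ k in atTop, ∀ u ∈ unitBox d, ∃ e : ℝ, |e| ≤ δ ∧
      C k u - Cinf u = φ k * S u + φ k * ψ k * (T u + e) := by
  obtain ⟨⟨hφ, -⟩, hψ, -, -, -, -, -, hT⟩ := h3
  filter_upwards [Metric.tendstoUniformlyOn_iff.1 hT δ hδ] with k hk u hu
  refine ⟨(C k u - Cinf u - φ k * S u) / (φ k * ψ k) - T u, ?_, ?_⟩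
  · have := hk u hu
    rw [Real.dist_eq, abs_sub_comm] at this
    exact this.le
  · have h1 := (hφ k).ne'
    have h2 := (hψ k).ne'
    field_simp
    ring

/-- Exact form of the bias minus its leading terms. Here `D₁ = C m - C_∞`, `D₂ = C n - C_∞`,
`p` stands for `(n/m) ^ ρφ`, `Q` for the limit of `p - 1`, and `e₁`, `e₂` are the third order
remainders at `m` and `n`. -/
lemma bias_identity {x y c f₁ f₂ g₁ g₂ s t e₁ e₂ p Q b L : ℝ} (hf : f₁ ≠ 0) (hg : g₁ ≠ 0)
    (hp : p - 1 ≠ 0) (h₁ : x - c = f₁ * s + f₁ * g₁ * (t + e₁))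
    (h₂ : y - c = f₂ * s + f₂ * g₂ * (t + e₂)) :
    (x - (y - x) / (p - 1) - c) - f₁ * (p - f₂ / f₁) * s / Q - f₁ * g₁ * b * t / L =
      f₁ * ((p - f₂ / f₁) * (s * (1 / (p - 1) - 1 / Q)) +
        g₁ * (t * ((p - f₂ / f₁ * (g₂ / g₁)) / (p - 1) - b / L) + p / (p - 1) * e₁
          - f₂ / f₁ * (g₂ / g₁) / (p - 1) * e₂)) := by
  have hx : x = c + (f₁ * s + f₁ * g₁ * (t + e₁)) := by linarith
  have hy : y = c + (f₂ * s + f₂ * g₂ * (t + e₂)) := by linarith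
  subst hx hy
  simp only [div_eq_mul_inv _ Q, div_eq_mul_inv _ L]
  field_simp
  ring

/-- expansion of the approximation bias of the naive bias-corrected
estimator. -/
theorem statement11 {d : ℕ} (C : ℕ → (Fin d → ℝ) → ℝ) (hcop : ∀ m, IsCopula (C m))
    (Cinf : (Fin d → ℝ) → ℝ) (φ : ℕ → ℝ) (ρφ : ℝ) (S : (Fin d → ℝ) → ℝ)
    (ψ : ℕ → ℝ) (ρψ : ℝ) (T : (Fin d → ℝ) → ℝ)
    (h3 : ThirdOrderCond C Cinf φ ρφ S ψ ρψ T)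
    (a : ℝ) (ha : 0 < a) (hane : a ≠ 1) :
    (∀ ε : ℝ, 0 < ε → ∃ M : ℕ, ∀ m ≥ M, ∀ u ∈ unitBox d,
      |(C m u - (C ⌊(m:ℝ) * a⌋₊ u - C m u) / (((⌊(m:ℝ) * a⌋₊ : ℝ) / m) ^ ρφ - 1) - Cinf u) -
          φ m * raf φ ρφ a m * S u / (a ^ ρφ - 1) -
          φ m * ψ m * (1 - a ^ ρψ) * T u / (1 - a ^ (-ρφ))|
        ≤ ε * (φ m * (ψ m + |raf φ ρφ a m|))) ∧
    (∃ K : ℝ, ∃ M : ℕ, ∀ m ≥ M, ∀ u ∈ unitBox d,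
      |C m u - (C ⌊(m:ℝ) * a⌋₊ u - C m u) / (((⌊(m:ℝ) * a⌋₊ : ℝ) / m) ^ ρφ - 1) - Cinf u|
        ≤ K * (φ m * (ψ m + |raf φ ρφ a m|))) := by
  have h3' := h3
  obtain ⟨⟨hφ, hρφ, hRφ, hS, -, -⟩, hψ, -, hRψ, hT, -, -, -⟩ := h3'
  obtain ⟨KS, hKS0, hKS⟩ := bounded_on_unitBox hS
  obtain ⟨KT, hKT0, hKT⟩ := bounded_on_unitBox hT
  have hA : a ^ ρφ - 1 ≠ 0 := sub_ne_zero.2 (rpow_ne_one_of_ne ha hane hρφ.ne)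
  have hApos : 0 < a ^ ρφ := Real.rpow_pos_of_pos ha _
  have hp := floor_ratio_rpow_tendsto ha ρφ
  have hq := hp.sub_const 1
  have hs := (hRφ.tendsto_floor ha).mul (hRψ.tendsto_floor ha)
  have hα : Tendsto (fun m : ℕ => KS * |1 / (((⌊(m:ℝ) * a⌋₊ : ℝ) / m) ^ ρφ - 1)
      - 1 / (a ^ ρφ - 1)|) atTop (nhds 0) := by
    simpa using (((hq.inv₀ hA).sub_const (a ^ ρφ - 1)⁻¹).abs).const_mul KS
  have hlim : (a ^ ρφ - a ^ ρφ * a ^ ρψ) / (a ^ ρφ - 1) = (1 - a ^ ρψ) / (1 - a ^ (-ρφ)) := by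
    have h1 : 1 - a ^ (-ρφ) = (a ^ ρφ - 1) / a ^ ρφ := by
      rw [Real.rpow_neg ha.le]; field_simp
    rw [h1]
    field_simp
  have hβ : Tendsto (fun m : ℕ => KT * |(((⌊(m:ℝ) * a⌋₊ : ℝ) / m) ^ ρφ -
      φ ⌊(m:ℝ) * a⌋₊ / φ m * (ψ ⌊(m:ℝ) * a⌋₊ / ψ m)) / (((⌊(m:ℝ) * a⌋₊ : ℝ) / m) ^ ρφ - 1)
      - (1 - a ^ ρψ) / (1 - a ^ (-ρφ))|) atTop (nhds 0) := by
    have := ((((hp.sub hs).div hq hA).sub_const ((1 - a ^ ρψ) / (1 - a ^ (-ρφ)))).abs).const_mul KT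
    rw [hlim] at this
    simpa using this
  -- The coefficients of the two remainders converge, hence their sum is eventually below `G`.
  obtain ⟨G, hG0, hG⟩ : ∃ G : ℝ, 0 < G ∧ ∀ᶠ m : ℕ in atTop,
      |((⌊(m:ℝ) * a⌋₊ : ℝ) / m) ^ ρφ / (((⌊(m:ℝ) * a⌋₊ : ℝ) / m) ^ ρφ - 1)| +
      |φ ⌊(m:ℝ) * a⌋₊ / φ m * (ψ ⌊(m:ℝ) * a⌋₊ / ψ m) /
        (((⌊(m:ℝ) * a⌋₊ : ℝ) / m) ^ ρφ - 1)| < G := by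
    have h := (hp.div hq hA).abs.add (hs.div hq hA).abs
    exact ⟨_, by positivity, h.eventually_lt_const (lt_add_one _)⟩
  have main : ∀ ε : ℝ, 0 < ε → ∃ M : ℕ, ∀ m ≥ M, ∀ u ∈ unitBox d,
      |(C m u - (C ⌊(m:ℝ) * a⌋₊ u - C m u) / (((⌊(m:ℝ) * a⌋₊ : ℝ) / m) ^ ρφ - 1) - Cinf u) -
          φ m * raf φ ρφ a m * S u / (a ^ ρφ - 1) -
          φ m * ψ m * (1 - a ^ ρψ) * T u / (1 - a ^ (-ρφ))|
        ≤ ε * (φ m * (ψ m + |raf φ ρφ a m|)) := by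
    intro ε hε
    have hδ : 0 < ε / 2 / G := by positivity
    have hrem := third_order_remainder h3 hδ
    rw [← eventually_atTop]
    filter_upwards [hrem, (floor_mul_tendsto ha).eventually hrem, hG,
      hα.eventually_lt_const hε, hβ.eventually_lt_const (half_pos hε),
      hq.eventually_ne hA] with m h1 h2 hGm hαm hβm hqm u hu
    obtain ⟨e₁, he₁, hC₁⟩ := h1 u hu
    obtain ⟨e₂, he₂, hC₂⟩ := h2 u hu
    have hid := bias_identity (Q := a ^ ρφ - 1) (b := 1 - a ^ ρψ) (L := 1 - a ^ (-ρφ))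
      (hφ m).ne' (hψ m).ne' hqm hC₁ hC₂
    unfold raf
    rw [hid, abs_mul, abs_of_pos (hφ m)]
    have hSu := hKS u hu
    have hTu := hKT u hu
    have hφm := hφ m
    have hψm := hψ m
    generalize ((⌊(m:ℝ) * a⌋₊ : ℝ) / m) ^ ρφ = p at *
    generalize p - φ ⌊(m:ℝ) * a⌋₊ / φ m = r at *
    generalize 1 / (p - 1) - 1 / (a ^ ρφ - 1) = α at *
    generalize (p - φ ⌊(m:ℝ) * a⌋₊ / φ m * (ψ ⌊(m:ℝ) * a⌋₊ / ψ m)) / (p - 1)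
      - (1 - a ^ ρψ) / (1 - a ^ (-ρφ)) = β at *
    generalize φ ⌊(m:ℝ) * a⌋₊ / φ m * (ψ ⌊(m:ℝ) * a⌋₊ / ψ m) / (p - 1) = σ at *
    generalize p / (p - 1) = γ at *
    have hSα : |S u * α| ≤ ε := by
      rw [abs_mul]
      exact (mul_le_mul_of_nonneg_right hSu (abs_nonneg _)).trans hαm.le
    have hTβ : |T u * β| ≤ ε / 2 := by
      rw [abs_mul]
      exact (mul_le_mul_of_nonneg_right hTu (abs_nonneg _)).trans hβm.le
    have hE : |γ * e₁| + |σ * e₂| ≤ ε / 2 := by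
      rw [abs_mul, abs_mul]
      calc |γ| * |e₁| + |σ| * |e₂| ≤ |γ| * (ε / 2 / G) + |σ| * (ε / 2 / G) := by gcongr
        _ = (|γ| + |σ|) * (ε / 2 / G) := by ring
        _ ≤ G * (ε / 2 / G) := by gcongr
        _ = ε / 2 := by field_simp
    have hsum : |T u * β + γ * e₁ - σ * e₂| ≤ ε := by
      have := abs_sub (T u * β + γ * e₁) (σ * e₂)
      have := abs_add_le (T u * β) (γ * e₁)
      linarith
    calc φ m * |r * (S u * α) + ψ m * (T u * β + γ * e₁ - σ * e₂)|
        ≤ φ m * (|r| * |S u * α| + ψ m * |T u * β + γ * e₁ - σ * e₂|) := by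
          gcongr
          refine (abs_add_le _ _).trans ?_
          rw [abs_mul r, abs_mul (ψ m), abs_of_pos hψm]
      _ ≤ φ m * (|r| * ε + ψ m * ε) := by gcongr
      _ = ε * (φ m * (ψ m + |r|)) := by ring
  refine ⟨main, ?_⟩
  obtain ⟨M, hM⟩ := main 1 one_pos
  refine ⟨1 + KS / |a ^ ρφ - 1| + |1 - a ^ ρψ| * KT / |1 - a ^ (-ρφ)|, M, fun m hm u hu => ?_⟩
  have h := hM m hm u hu
  have hSu := hKS u hu
  have hTu := hKT u hu
  have hφm := hφ m
  have hψm := hψ m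
  generalize C m u - (C ⌊(m:ℝ) * a⌋₊ u - C m u) / (((⌊(m:ℝ) * a⌋₊ : ℝ) / m) ^ ρφ - 1)
    - Cinf u = B at *
  generalize raf φ ρφ a m = r at *
  have hX : |φ m * r * S u / (a ^ ρφ - 1)| ≤
      KS / |a ^ ρφ - 1| * (φ m * (ψ m + |r|)) := by
    rw [abs_div, abs_mul, abs_mul, abs_of_pos hφm]
    calc φ m * |r| * |S u| / |a ^ ρφ - 1| ≤ φ m * (ψ m + |r|) * KS / |a ^ ρφ - 1| := by
          gcongr
          linarith
      _ = _ := by ring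
  have hY : |φ m * ψ m * (1 - a ^ ρψ) * T u / (1 - a ^ (-ρφ))| ≤
      |1 - a ^ ρψ| * KT / |1 - a ^ (-ρφ)| * (φ m * (ψ m + |r|)) := by
    rw [abs_div, abs_mul, abs_mul, abs_mul, abs_of_pos hφm, abs_of_pos hψm]
    calc φ m * ψ m * |1 - a ^ ρψ| * |T u| / |1 - a ^ (-ρφ)|
        ≤ φ m * (ψ m + |r|) * |1 - a ^ ρψ| * KT / |1 - a ^ (-ρφ)| := by
          gcongr
          linarith [abs_nonneg r]
      _ = _ := by ring
  generalize φ m * r * S u / (a ^ ρφ - 1) = X at *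
  generalize φ m * ψ m * (1 - a ^ ρψ) * T u / (1 - a ^ (-ρφ)) = Y at *
  have hB : |B| ≤ |B - X - Y| + |X| + |Y| := by
    have h1 := abs_add_le (B - X - Y) (X + Y)
    have h2 := abs_add_le X Y
    rw [show B - X - Y + (X + Y) = B by ring] at h1
    linarith
  linarith
end
end

section
/- Let A = [a_∧, a_∨] ⊂ (0,∞) be a compact interval of positive length and f : A → (0,∞) a continuous strictly positive function with ∫_A f(a) da = 1. For ρ < 0 set μ_ρ := ∫_A a^ρ f(a) da, and for a fixed ρ_0 < 0 define ℒ(ρ) := ( ∫_A (a^ρ − μ_ρ)(a^{ρ_0} − μ_{ρ_0}) f(a) da )² / ( ∫_A (a^ρ − μ_ρ)² f(a) da · ∫_A (a^{ρ_0} − μ_{ρ_0})² f(a) da ). Then the denominators are strictly positive for every ρ < 0, ℒ(ρ) ≤ 1 for all ρ < 0, and ℒ(ρ) = 1 if and only if ρ = ρ_0. -/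
/-!
With `g a = a ^ ρ - μ_ρ` and `h a = a ^ ρ0 - μ_ρ0`, put `A = ∫ g² f`, `B = ∫ g h f`, `C = ∫ h² f`.
Then `∫ (C g - B h)² f = C (A C - B²)`, which is the Cauchy–Schwarz inequality once `C > 0`, and
which shows that `B² = A C` forces `C g = B h` on the whole interval, as `f` is positive and
everything is continuous (`integral_sq_mul_pos`). But a relation `s a ^ ρ + t a ^ ρ0 = c` on an
interval with `s ≠ 0`, `ρ ≠ 0`, `ρ ≠ ρ0` is impossible: differentiating it makes `a ^ (ρ - ρ0)`
constant (`rpow_not_affine`). The case `t = 0` of the same fact gives the positivity of the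
denominators.
-/

open MeasureTheory Filter Set

noncomputable section

/-- `μ_ρ = ∫_A a^ρ f(a) da`. -/
def muRho (aw av : ℝ) (f : ℝ → ℝ) (ρ : ℝ) : ℝ := ∫ a in aw..av, a ^ ρ * f a

/-- The normalized squared correlation criterion `ℒ(ρ)`. -/
def Lscore (aw av : ℝ) (f : ℝ → ℝ) (ρ0 ρ : ℝ) : ℝ :=
  (∫ a in aw..av, (a ^ ρ - muRho aw av f ρ) * (a ^ ρ0 - muRho aw av f ρ0) * f a) ^ 2 /
    ((∫ a in aw..av, (a ^ ρ - muRho aw av f ρ) ^ 2 * f a) *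
      (∫ a in aw..av, (a ^ ρ0 - muRho aw av f ρ0) ^ 2 * f a))

/-- On a nondegenerate interval of positive reals, `a ^ ρ` with `ρ ≠ 0` is not an affine function of
another power `a ^ σ`. -/
lemma rpow_not_affine {aw av : ℝ} (haw : 0 < aw) (hlt : aw < av) {s t c ρ σ : ℝ}
    (hs : s ≠ 0) (hρ : ρ ≠ 0) (hne : ρ ≠ σ)
    (h : ∀ a ∈ Set.Icc aw av, s * a ^ ρ + t * a ^ σ = c) : False := by
  have key : ∀ a ∈ Set.Ioo aw av, a ^ (ρ - σ) = -(t * σ) / (s * ρ) := by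
    intro a ha
    have ha0 : 0 < a := haw.trans ha.1
    have h1 : HasDerivAt (fun x : ℝ => s * x ^ ρ + t * x ^ σ)
        (s * (ρ * a ^ (ρ - 1)) + t * (σ * a ^ (σ - 1))) a :=
      ((Real.hasDerivAt_rpow_const (Or.inl ha0.ne')).const_mul s).add
        ((Real.hasDerivAt_rpow_const (Or.inl ha0.ne')).const_mul t)
    have h2 : HasDerivAt (fun x : ℝ => s * x ^ ρ + t * x ^ σ) 0 a := by
      refine (hasDerivAt_const a c).congr_of_eventuallyEq ?_
      filter_upwards [Ioo_mem_nhds ha.1 ha.2] with x hx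
      exact h x (Ioo_subset_Icc_self hx)
    have h3 := h1.unique h2
    have h4 : a ^ (ρ - 1) = a ^ (ρ - σ) * a ^ (σ - 1) := by
      rw [← Real.rpow_add ha0]; congr 1; ring
    have h5 : a ^ (σ - 1) ≠ 0 := (Real.rpow_pos_of_pos ha0 _).ne'
    rw [h4] at h3
    rw [eq_div_iff (mul_ne_zero hs hρ)]
    apply mul_right_cancel₀ h5
    linear_combination h3
  obtain ⟨x, hx⟩ := exists_between hlt
  obtain ⟨y, hy⟩ := exists_between hx.2
  have hx0 : 0 < x := haw.trans hx.1
  have hxy : x ^ (ρ - σ) = y ^ (ρ - σ) := by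
    rw [key x ⟨hx.1, hx.2⟩, key y ⟨hx.1.trans hy.1, hy.2⟩]
  exact hy.1.ne ((Real.rpow_left_inj hx0.le (hx0.trans hy.1).le (sub_ne_zero.2 hne)).1 hxy)

lemma integral_sq_mul_pos {aw av : ℝ} (hlt : aw < av) {f g : ℝ → ℝ}
    (hf : ContinuousOn f (Set.Icc aw av)) (hfpos : ∀ a ∈ Set.Icc aw av, 0 < f a)
    (hg : ContinuousOn g (Set.Icc aw av)) (hne : ∃ a ∈ Set.Icc aw av, g a ≠ 0) :
    0 < ∫ a in aw..av, g a ^ 2 * f a := by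
  obtain ⟨a, ha, hga⟩ := hne
  refine intervalIntegral.integral_pos hlt ((hg.pow 2).mul hf) (fun x hx => ?_) ⟨a, ha, ?_⟩
  · exact mul_nonneg (sq_nonneg _) (hfpos x (Ioc_subset_Icc_self hx)).le
  · exact mul_pos (by positivity) (hfpos a ha)

lemma integral_sq_combination {aw av : ℝ} (hlt : aw < av) {f g h : ℝ → ℝ}
    (hf : ContinuousOn f (Set.Icc aw av)) (hg : ContinuousOn g (Set.Icc aw av))
    (hh : ContinuousOn h (Set.Icc aw av)) (s t : ℝ) :
    ∫ a in aw..av, (s * g a - t * h a) ^ 2 * f a =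
      s ^ 2 * (∫ a in aw..av, g a ^ 2 * f a) - 2 * s * t * (∫ a in aw..av, g a * h a * f a)
        + t ^ 2 * ∫ a in aw..av, h a ^ 2 * f a := by
  have i1 : IntervalIntegrable (fun a => g a ^ 2 * f a) volume aw av :=
    ((hg.pow 2).mul hf).intervalIntegrable_of_Icc hlt.le
  have i2 : IntervalIntegrable (fun a => g a * h a * f a) volume aw av :=
    ((hg.mul hh).mul hf).intervalIntegrable_of_Icc hlt.le
  have i3 : IntervalIntegrable (fun a => h a ^ 2 * f a) volume aw av :=
    ((hh.pow 2).mul hf).intervalIntegrable_of_Icc hlt.le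
  rw [← intervalIntegral.integral_const_mul, ← intervalIntegral.integral_const_mul,
    ← intervalIntegral.integral_const_mul,
    ← intervalIntegral.integral_sub (i1.const_mul _) (i2.const_mul _),
    ← intervalIntegral.integral_add ((i1.const_mul _).sub (i2.const_mul _)) (i3.const_mul _)]
  congr 1
  ext a
  ring

/-- the criterion `ℒ` is at most `1` and equals `1` exactly at `ρ_0`. -/
theorem statement13 (aw av : ℝ) (haw : 0 < aw) (hlt : aw < av)
    (f : ℝ → ℝ) (hfc : ContinuousOn f (Set.Icc aw av))
    (hfpos : ∀ a ∈ Set.Icc aw av, 0 < f a)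
    (hfint : (∫ a in aw..av, f a) = 1)
    (ρ0 : ℝ) (hρ0 : ρ0 < 0) :
    (∀ ρ : ℝ, ρ < 0 → 0 < ∫ a in aw..av, (a ^ ρ - muRho aw av f ρ) ^ 2 * f a) ∧
    (∀ ρ : ℝ, ρ < 0 → Lscore aw av f ρ0 ρ ≤ 1) ∧
    (∀ ρ : ℝ, ρ < 0 → (Lscore aw av f ρ0 ρ = 1 ↔ ρ = ρ0)) := by
  have hcont : ∀ ρ : ℝ, ContinuousOn (fun a : ℝ => a ^ ρ - muRho aw av f ρ) (Set.Icc aw av) :=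
    fun ρ => (continuousOn_id.rpow_const
      (fun a ha => Or.inl (haw.trans_le ha.1).ne')).sub continuousOn_const
  have hpos : ∀ ρ : ℝ, ρ < 0 → 0 < ∫ a in aw..av, (a ^ ρ - muRho aw av f ρ) ^ 2 * f a := by
    intro ρ hρ
    refine integral_sq_mul_pos hlt hfc hfpos (hcont ρ) ?_
    by_contra! hzero
    refine rpow_not_affine haw hlt (s := 1) (t := 0) (c := muRho aw av f ρ) (σ := 0)
      one_ne_zero hρ.ne hρ.ne (fun a ha => ?_)
    linear_combination hzero a ha
  -- The strict Cauchy–Schwarz inequality for distinct exponents.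
  have hstrict : ∀ ρ : ℝ, ρ < 0 → ρ ≠ ρ0 → Lscore aw av f ρ0 ρ < 1 := by
    intro ρ hρ hne
    have hA := hpos ρ hρ
    have hC := hpos ρ0 hρ0
    have hexp := integral_sq_combination hlt hfc (hcont ρ) (hcont ρ0)
    unfold Lscore
    set A := ∫ a in aw..av, (a ^ ρ - muRho aw av f ρ) ^ 2 * f a
    set C := ∫ a in aw..av, (a ^ ρ0 - muRho aw av f ρ0) ^ 2 * f a
    set B := ∫ a in aw..av, (a ^ ρ - muRho aw av f ρ) * (a ^ ρ0 - muRho aw av f ρ0) * f a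
    have hQ : 0 < ∫ a in aw..av,
        (C * (a ^ ρ - muRho aw av f ρ) - B * (a ^ ρ0 - muRho aw av f ρ0)) ^ 2 * f a := by
      refine integral_sq_mul_pos hlt hfc hfpos
        ((continuousOn_const.mul (hcont ρ)).sub (continuousOn_const.mul (hcont ρ0))) ?_
      by_contra! hzero
      refine rpow_not_affine haw hlt (s := C) (t := -B)
        (c := C * muRho aw av f ρ - B * muRho aw av f ρ0) hC.ne' hρ.ne hne (fun a ha => ?_)
      linear_combination hzero a ha
    rw [hexp C B] at hQ
    have hQ' : 0 < C * (A * C - B ^ 2) := by linear_combination hQ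
    rw [div_lt_one (mul_pos hA hC)]
    exact sub_pos.1 (pos_of_mul_pos_right hQ' hC.le)
  have hself : Lscore aw av f ρ0 ρ0 = 1 := by
    unfold Lscore
    simp only [← pow_two]
    exact div_self (pow_pos (hpos ρ0 hρ0) 2).ne'
  refine ⟨hpos, fun ρ hρ => ?_, fun ρ hρ => ⟨fun h => ?_, fun h => h ▸ hself⟩⟩
  · rcases eq_or_ne ρ ρ0 with rfl | hne
    · exact hself.le
    · exact (hstrict ρ hρ hne).le
  · by_contra hne
    exact (hstrict ρ hρ hne).ne h
end
end
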